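/- arXiv:2411.05372 — 5 statements merged into one kernel-verified Lean document; each statement's English description precedes it below -/
import Mathlib

section
/- There exist a finite abelian group Γ and a subset Λ ⊆ Γ satisfying (EP1) but not (EP2), and there exist a finite abelian group Γ' and a subset Λ' ⊆ Γ' satisfying (EP2) but not (EP1). -/
/-- Condition (EP1): for all `a, b, c` with `a + b + c ∈ Λ`, either `a + b ∈ Λ`,
or `(2a + ⟨c⟩) ∩ Λ ≠ ∅`, or `(2b + ⟨c⟩) ∩ Λ ≠ ∅`. -/
def EP1 {Γ : Type} [AddCommGroup Γ] (Λ : Set Γ) : Prop :=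
  ∀ a b c : Γ, a + b + c ∈ Λ →
    a + b ∈ Λ ∨ (∃ z ∈ AddSubgroup.zmultiples c, 2 • a + z ∈ Λ) ∨
      ∃ z ∈ AddSubgroup.zmultiples c, 2 • b + z ∈ Λ

/-- Condition (EP2): for all `a, b, c` with `2a + b + c ∈ Λ`, either
`(2a + ⟨b⟩) ∩ Λ ≠ ∅` or `(2a + ⟨c⟩) ∩ Λ ≠ ∅`. -/
def EP2 {Γ : Type} [AddCommGroup Γ] (Λ : Set Γ) : Prop :=
  ∀ a b c : Γ, 2 • a + b + c ∈ Λ →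
    (∃ z ∈ AddSubgroup.zmultiples b, 2 • a + z ∈ Λ) ∨
      ∃ z ∈ AddSubgroup.zmultiples c, 2 • a + z ∈ Λ

/-- The Erdős–Pósa condition: both (EP1) and (EP2). -/
def EPCondition {Γ : Type} [AddCommGroup Γ] (Λ : Set Γ) : Prop :=
  EP1 Λ ∧ EP2 Λ

theorem mem_zm_aux {G : Type} [AddCommGroup G] (n : ℕ) [NeZero n] (h : ∀ g : G, n • g = 0)
    (Λ : Set G) (d c : G) :
    (∃ z ∈ AddSubgroup.zmultiples c, d + z ∈ Λ) ↔ ∃ k : Fin n, d + k.val • c ∈ Λ := by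
  constructor
  · rintro ⟨z, hz, hm⟩
    obtain ⟨k, rfl⟩ := AddSubgroup.mem_zmultiples_iff.1 hz
    have hn : (0 : ℤ) < n := by exact_mod_cast Nat.pos_of_ne_zero (NeZero.ne n)
    have h1 := Int.emod_nonneg k hn.ne'
    have h2 := Int.emod_lt_of_pos k hn
    refine ⟨⟨(k % n).toNat, by omega⟩, ?_⟩
    have e : (k % n).toNat • c = k • c := by
      rw [← natCast_zsmul, Int.toNat_of_nonneg h1]
      conv_rhs => rw [← Int.emod_add_mul_ediv k n, add_zsmul, mul_comm, mul_zsmul,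
        natCast_zsmul, h, zsmul_zero, add_zero]
    simpa [e] using hm
  · rintro ⟨k, hk⟩
    exact ⟨_, AddSubgroup.nsmul_mem_zmultiples c k.val, hk⟩

/-- There is a finite abelian group with a subset satisfying (EP1)
but not (EP2), and a finite abelian group with a subset satisfying (EP2) but not (EP1). -/
theorem exists_EP1_not_EP2_and_exists_EP2_not_EP1 :
    (∃ (Γ : Type) (_inst : AddCommGroup Γ) (_fin : Fintype Γ) (Λ : Set Γ),
      @EP1 Γ _inst Λ ∧ ¬ @EP2 Γ _inst Λ) ∧
    (∃ (Γ' : Type) (_inst' : AddCommGroup Γ') (_fin' : Fintype Γ') (Λ' : Set Γ'),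
      @EP2 Γ' _inst' Λ' ∧ ¬ @EP1 Γ' _inst' Λ') := by
  constructor
  · refine ⟨ZMod 3 × ZMod 3, inferInstance, inferInstance,
      {x | x = (0, 0) ∨ x = (0, 1) ∨ x = (1, 0)}, ?_, ?_⟩
    · simp only [EP1, mem_zm_aux 3 (G := ZMod 3 × ZMod 3) (by decide)]
      simp only [Set.mem_ofPred_eq]
      decide +kernel
    · simp only [EP2, mem_zm_aux 3 (G := ZMod 3 × ZMod 3) (by decide)]
      simp only [Set.mem_ofPred_eq]
      decide +kernel
  · refine ⟨ZMod 4, inferInstance, inferInstance, {x | x = 1}, ?_, ?_⟩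
    · simp only [EP2, mem_zm_aux 4 (G := ZMod 4) (by decide)]
      simp only [Set.mem_ofPred_eq]
      decide +kernel
    · simp only [EP1, mem_zm_aux 4 (G := ZMod 4) (by decide)]
      simp only [Set.mem_ofPred_eq]
      decide +kernel
end

section
/- Let Γ be a finite abelian group and let Λ ⊆ Γ. Suppose there exist an integer m ≥ 1, elements g₁,…,g_m, h₁, h₂ ∈ Γ, and a nonempty subset S ⊆ [m] such that: (i) (Σ_{i∈[m]} g_i) + h₁ + h₂ ∈ Λ; (ii) for every i ∈ [m] and all b₁,b₂ ∈ {0,1,2} with b₁+b₂ = 2, (⟨g_j : j ∈ [m]∖{i}⟩ + b₁h₁ + b₂h₂) ∩ Λ = ∅; (iii) for all b₁,b₂ ∈ {0,1,2} with b₁+b₂ = 2 and all integers c₁,…,c_m with (Σ_{i∈[m]} c_i g_i) + b₁h₁ + b₂h₂ ∈ Λ, every i ∈ [m]∖S has c_i odd; and (iv) if m = 1, then (⟨g₁⟩ + 2h₁) ∩ Λ = ∅ and (⟨g₁⟩ + 2h₂) ∩ Λ = ∅. Then Λ does not satisfy the Erdős–Pósa condition. -/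
/-- If the group-label data `g₁, …, g_m, h₁, h₂` of a `Λ`-obstruction
exist (conditions (A3)–(A5) and (A7), with `S` the nonempty set of indices whose
handlebars are in series), then `Λ` does not satisfy the Erdős–Pósa condition. -/
theorem obstruction_data_implies_not_EPCondition
    (Γ : Type) [AddCommGroup Γ] [Fintype Γ] (Λ : Set Γ)
    (m : ℕ) (hm : 1 ≤ m) (g : Fin m → Γ) (h₁ h₂ : Γ)
    (S : Set (Fin m)) (hS : S.Nonempty)
    (hA3 : (∑ i, g i) + h₁ + h₂ ∈ Λ)
    (hA4 : ∀ i : Fin m, ∀ b₁ b₂ : ℕ, b₁ + b₂ = 2 →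
      ¬ ∃ z ∈ AddSubgroup.closure (g '' {j | j ≠ i}), z + b₁ • h₁ + b₂ • h₂ ∈ Λ)
    (hA5 : ∀ b₁ b₂ : ℕ, b₁ + b₂ = 2 → ∀ cc : Fin m → ℤ,
      (∑ i, cc i • g i) + b₁ • h₁ + b₂ • h₂ ∈ Λ → ∀ i ∉ S, Odd (cc i))
    (hA7 : m = 1 → ∀ i : Fin m,
      (¬ ∃ z ∈ AddSubgroup.zmultiples (g i), z + 2 • h₁ ∈ Λ) ∧
      ¬ ∃ z ∈ AddSubgroup.zmultiples (g i), z + 2 • h₂ ∈ Λ) :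
    ¬ EPCondition Λ := by
  rintro ⟨e1, e2⟩
  have hz : ∀ c z : Γ, ∀ H : AddSubgroup Γ, c ∈ H → z ∈ AddSubgroup.zmultiples c → z ∈ H := by
    intro c z H hc hz
    exact (AddSubgroup.zmultiples_le_of_mem hc) hz
  let p : Fin m := ⟨0, by omega⟩
  rcases Nat.lt_or_ge 1 m with hm2 | hm1
  · let q : Fin m := ⟨1, hm2⟩
    have hpq : p ≠ q := by
      intro h
      have := congrArg Fin.val h
      simp [p, q] at this
    have hgp : g p ∈ AddSubgroup.closure (g '' {j | j ≠ q}) :=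
      AddSubgroup.subset_closure ⟨p, hpq, rfl⟩
    have hc : (∑ j ∈ Finset.univ.erase p, g j) ∈ AddSubgroup.closure (g '' {j | j ≠ p}) := by
      apply AddSubgroup.sum_mem
      intro j hj
      exact AddSubgroup.subset_closure ⟨j, Finset.ne_of_mem_erase hj, rfl⟩
    have hsum := Finset.add_sum_erase Finset.univ g (Finset.mem_univ p)
    rw [← hsum] at hA3
    generalize (∑ j ∈ Finset.univ.erase p, g j) = c at hc hA3
    rcases e1 (h₁ + g p) h₂ c (by convert hA3 using 1; abel) with h | ⟨z, hzc, h⟩ | ⟨z, hzc, h⟩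
    · exact hA4 q 1 1 rfl ⟨g p, hgp, by convert h using 1; abel⟩
    · rcases e2 h₁ (2 • g p) z (by convert h using 1; abel) with ⟨w, hw, h⟩ | ⟨w, hw, h⟩
      · exact hA4 q 2 0 rfl ⟨w, hz _ _ _ (AddSubgroup.nsmul_mem _ hgp 2) hw,
          by convert h using 1; rw [zero_nsmul]; abel⟩
      · exact hA4 p 2 0 rfl ⟨w, hz _ _ _ (hz _ _ _ hc hzc) hw, by convert h using 1; rw [zero_nsmul]; abel⟩
    · exact hA4 p 0 2 rfl ⟨z, hz _ _ _ hc hzc, by convert h using 1; rw [zero_nsmul]; abel⟩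
  · obtain rfl : m = 1 := by omega
    rw [Fin.sum_univ_one] at hA3
    rcases e1 h₁ h₂ (g 0) (by convert hA3 using 1; abel) with h | ⟨z, hzc, h⟩ | ⟨z, hzc, h⟩
    · exact hA4 0 1 1 rfl ⟨0, AddSubgroup.zero_mem _, by convert h using 1; abel⟩
    · exact (hA7 rfl 0).1 ⟨z, hzc, by rwa [add_comm]⟩
    · exact (hA7 rfl 0).2 ⟨z, hzc, by rwa [add_comm]⟩
end

section
/- Let Γ be a finite abelian group and let Λ ⊆ Γ. Then there exists a Λ-obstruction (for some vertex set A, some positive integer k, and some Γ-labelled graph) if and only if Λ does not satisfy the Erdős–Pósa condition; moreover, if Λ fails the Erdős–Pósa condition, then for every positive integer k there is a Λ-obstruction that is an (A,k)-ribboned wall. -/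
/-- A loopless multigraph (parallel edges allowed) whose edges are labelled
by elements of `Γ`: a `Γ`-labelled graph `(G, γ)`. -/
structure LabGraph (V : Type) (Γ : Type) where
  E : Type
  ends : E → Sym2 V
  loopless : ∀ e, ¬ (ends e).IsDiag
  lab : E → Γ

/-- A path in a labelled multigraph, given by its sequence of (distinct)
vertices `v 0, …, v n` and the traversed edges `e 0, …, e (n-1)`. -/
structure GPath {V Γ : Type} (G : LabGraph V Γ) where
  n : ℕ
  v : Fin (n + 1) → V
  e : Fin n → G.E
  inj : Function.Injective v
  incid : ∀ i : Fin n, G.ends (e i) = s(v i.castSucc, v i.succ)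

namespace GPath

variable {V Γ : Type} {G : LabGraph V Γ}

/-- The vertex set of a path. -/
def verts (P : GPath G) : Set V :=
  Set.range P.v

/-- The edge set of a path. -/
def edgeSet (P : GPath G) : Set G.E :=
  Set.range P.e

/-- The first vertex (one endpoint) of a path. -/
def first (P : GPath G) : V :=
  P.v 0

/-- The last vertex (the other endpoint) of a path. -/
def last (P : GPath G) : V :=
  P.v (Fin.last P.n)

/-- `x` is an internal vertex of the path `P`. -/
def Internal (P : GPath G) (x : V) : Prop :=
  ∃ i : Fin (P.n + 1), P.v i = x ∧ i ≠ 0 ∧ i ≠ Fin.last P.n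

/-- The `γ`-length of a path: the sum of the labels of its edges. -/
def glen [AddCommMonoid Γ] (P : GPath G) : Γ :=
  ∑ i, G.lab (P.e i)

/-- `x` occurs strictly before `y` on the path `P`. -/
def before (P : GPath G) (x y : V) : Prop :=
  ∃ i j : Fin (P.n + 1), i < j ∧ P.v i = x ∧ P.v j = y

end GPath

/-- An `A`-path: a path with at least one edge, both endpoints in `A`,
and internally disjoint from `A`. -/
def IsAPath {V Γ : Type} {G : LabGraph V Γ} (A : Set V) (P : GPath G) : Prop :=
  0 < P.n ∧ P.first ∈ A ∧ P.last ∈ A ∧ ∀ x, P.Internal x → x ∉ A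
/-- The two degree-1 vertices deleted from the `[2c] × [r]` grid-wall
(coordinates are 1-indexed). -/
def wallDeleted (c r : ℕ) : Set (ℕ × ℕ) :=
  {(1, 1), if Odd r then (2 * c, r) else (1, r)}

/-- The vertex set of the elementary `(c, r)`-wall (1-indexed coordinates). -/
def wallVerts (c r : ℕ) : Set (ℕ × ℕ) :=
  {p | 1 ≤ p.1 ∧ p.1 ≤ 2 * c ∧ 1 ≤ p.2 ∧ p.2 ≤ r} \ wallDeleted c r

/-- The adjacency relation of the elementary `(c, r)`-wall: horizontal edges
`(i,j)(i+1,j)` and vertical edges `(i,j)(i,j+1)` for `i + j` odd. -/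
def wallAdj (c r : ℕ) (p q : ℕ × ℕ) : Prop :=
  p ∈ wallVerts c r ∧ q ∈ wallVerts c r ∧
    ((p.2 = q.2 ∧ (q.1 = p.1 + 1 ∨ p.1 = q.1 + 1)) ∨
      (p.1 = q.1 ∧ ((q.2 = p.2 + 1 ∧ Odd (p.1 + p.2)) ∨ (p.2 = q.2 + 1 ∧ Odd (q.1 + q.2)))))

/-- The elementary vertices of the `i`-th column of the elementary wall. -/
def wallColVerts (c r i : ℕ) : Set (ℕ × ℕ) :=
  {p ∈ wallVerts c r | p.1 = 2 * i - 1 ∨ p.1 = 2 * i}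

/-- The elementary vertices on the boundary (first and last rows and columns). -/
def wallBoundaryVerts (c r : ℕ) : Set (ℕ × ℕ) :=
  {p ∈ wallVerts c r | p.1 ≤ 2 ∨ 2 * c - 1 ≤ p.1 ∨ p.2 = 1 ∨ p.2 = r}

/-- A `(c, r)`-wall in the graph `G`: a subdivision of the elementary `(c, r)`-wall.
`nail p` is the branch vertex (nail) corresponding to the elementary vertex `p`, and
`bp p q` is the subdivided branch path realizing the elementary edge `pq`; distinct
branch paths meet only in common nails.  The fields `col1` and `colc` record the
first and the last column of the wall as paths, each oriented starting from its
endpoint in the first row. -/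
structure Wall {V Γ : Type} (G : LabGraph V Γ) (c r : ℕ) where
  hc : 3 ≤ c
  hr : 3 ≤ r
  nail : ℕ × ℕ → V
  bp : ℕ × ℕ → ℕ × ℕ → GPath G
  nail_injOn : Set.InjOn nail (wallVerts c r)
  bp_pos : ∀ p q, wallAdj c r p q → 0 < (bp p q).n
  bp_first : ∀ p q, wallAdj c r p q → (bp p q).first = nail p
  bp_last : ∀ p q, wallAdj c r p q → (bp p q).last = nail q
  bp_symm_v : ∀ p q, wallAdj c r p q → (bp q p).verts = (bp p q).verts
  bp_symm_e : ∀ p q, wallAdj c r p q → (bp q p).edgeSet = (bp p q).edgeSet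
  bp_disj : ∀ p q p' q', wallAdj c r p q → wallAdj c r p' q' →
    ({p, q} : Set (ℕ × ℕ)) ≠ {p', q'} →
    (bp p q).verts ∩ (bp p' q').verts ⊆ nail '' (({p, q} : Set (ℕ × ℕ)) ∩ {p', q'})
  nail_avoid : ∀ p q, wallAdj c r p q → ∀ w ∈ wallVerts c r, w ≠ p → w ≠ q →
    nail w ∉ (bp p q).verts
  col1 : GPath G
  colc : GPath G
  col1_verts : col1.verts =
    {x | ∃ p q, wallAdj c r p q ∧ p ∈ wallColVerts c r 1 ∧ q ∈ wallColVerts c r 1 ∧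
      x ∈ (bp p q).verts}
  colc_verts : colc.verts =
    {x | ∃ p q, wallAdj c r p q ∧ p ∈ wallColVerts c r c ∧ q ∈ wallColVerts c r c ∧
      x ∈ (bp p q).verts}
  col1_edges : ∀ i, ∃ p q, wallAdj c r p q ∧ p ∈ wallColVerts c r 1 ∧
    q ∈ wallColVerts c r 1 ∧ col1.e i ∈ (bp p q).edgeSet
  colc_edges : ∀ i, ∃ p q, wallAdj c r p q ∧ p ∈ wallColVerts c r c ∧
    q ∈ wallColVerts c r c ∧ colc.e i ∈ (bp p q).edgeSet
  col1_first : col1.first = nail (2, 1)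
  colc_first : colc.first = nail (2 * c - 1, 1)

namespace Wall

variable {V Γ : Type} {G : LabGraph V Γ} {c r : ℕ}

/-- The vertex set `V(W)` of a wall. -/
def verts (W : Wall G c r) : Set V :=
  {x | ∃ p q, wallAdj c r p q ∧ x ∈ (W.bp p q).verts}

/-- The edge set `E(W)` of a wall. -/
def edges (W : Wall G c r) : Set G.E :=
  {e | ∃ p q, wallAdj c r p q ∧ e ∈ (W.bp p q).edgeSet}

/-- The set of nails `N^W` of a wall. -/
def nails (W : Wall G c r) : Set V :=
  W.nail '' wallVerts c r

/-- The set of boundary nails `∂N^W` of a wall. -/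
def boundaryNails (W : Wall G c r) : Set V :=
  W.nail '' wallBoundaryVerts c r

/-- The vertex set of the `j`-th row of a wall. -/
def rowVerts (W : Wall G c r) (j : ℕ) : Set V :=
  {x | ∃ p q, wallAdj c r p q ∧ p.2 = j ∧ q.2 = j ∧ x ∈ (W.bp p q).verts}

/-- The vertices on the column-boundary (the first or the last column). -/
def colBoundary (W : Wall G c r) : Set V :=
  W.col1.verts ∪ W.colc.verts

/-- The edges lying on the first or the last column of a wall. -/
def colEdges (W : Wall G c r) : Set G.E :=
  W.col1.edgeSet ∪ W.colc.edgeSet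

/-- The linear order `≺_W` restricted to the column-boundary: first column from the
first row downwards, then the last column from the last row upwards. -/
def bLT (W : Wall G c r) (x y : V) : Prop :=
  (x ∈ W.col1.verts ∧ y ∈ W.colc.verts) ∨ W.col1.before x y ∨ W.colc.before y x

/-- A `W`-path: a path with both endpoints in `V(W)`, internally disjoint from `W`. -/
def IsWPath (W : Wall G c r) (P : GPath G) : Prop :=
  0 < P.n ∧ P.first ∈ W.verts ∧ P.last ∈ W.verts ∧
    (∀ x, P.Internal x → x ∉ W.verts) ∧ ∀ i, P.e i ∉ W.edges

/-- A `W`-handle: a `W`-path with both endpoints on the column-boundary. -/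
def IsHandle (W : Wall G c r) (P : GPath G) : Prop :=
  W.IsWPath P ∧ P.first ∈ W.colBoundary ∧ P.last ∈ W.colBoundary

/-- The endpoint pairs of the two handles are in series with respect to `≺_W`. -/
def SeriesPair (W : Wall G c r) (P Q : GPath G) : Prop :=
  ∃ x₁ x₂ y₁ y₂ : V, ({x₁, x₂} : Set V) = {P.first, P.last} ∧
    ({y₁, y₂} : Set V) = {Q.first, Q.last} ∧ W.bLT x₁ x₂ ∧ W.bLT y₁ y₂ ∧
    (W.bLT x₂ y₁ ∨ W.bLT y₂ x₁)

/-- The endpoint pairs of the two handles are nested with respect to `≺_W`. -/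
def NestedPair (W : Wall G c r) (P Q : GPath G) : Prop :=
  ∃ x₁ x₂ y₁ y₂ : V, ({x₁, x₂} : Set V) = {P.first, P.last} ∧
    ({y₁, y₂} : Set V) = {Q.first, Q.last} ∧ W.bLT x₁ x₂ ∧ W.bLT y₁ y₂ ∧
    ((W.bLT x₁ y₁ ∧ W.bLT y₂ x₂) ∨ (W.bLT y₁ x₁ ∧ W.bLT x₂ y₂))

/-- The endpoint pairs of the two handles are crossing with respect to `≺_W`. -/
def CrossingPair (W : Wall G c r) (P Q : GPath G) : Prop :=
  (({P.first, P.last} : Set V) ∩ {Q.first, Q.last} = ∅) ∧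
    ¬ W.SeriesPair P Q ∧ ¬ W.NestedPair P Q

/-- The handles in `S` are pairwise in series. -/
def PureSeries (W : Wall G c r) (S : Set (GPath G)) : Prop :=
  ∀ P ∈ S, ∀ Q ∈ S, P ≠ Q → W.SeriesPair P Q

/-- The handles in `S` are pairwise nested. -/
def PureNested (W : Wall G c r) (S : Set (GPath G)) : Prop :=
  ∀ P ∈ S, ∀ Q ∈ S, P ≠ Q → W.NestedPair P Q

/-- The handles in `S` are pairwise crossing. -/
def PureCrossing (W : Wall G c r) (S : Set (GPath G)) : Prop :=
  ∀ P ∈ S, ∀ Q ∈ S, P ≠ Q → W.CrossingPair P Q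

/-- A (possibly trivial) path contained in the union of the first and last columns. -/
def IsColPath (W : Wall G c r) (R : GPath G) : Prop :=
  R.verts ⊆ W.colBoundary ∧ ∀ i, R.e i ∈ W.colEdges

/-- `T` is a frame for the family `S` of `W`-handles: `T = V(R) ∪ V(R')` for paths
`R, R'` in `C₁ ∪ C_c` such that every handle in `S` is a `V(R)`–`V(R')`-path. -/
def HandlebarFrame (W : Wall G c r) (S : Set (GPath G)) (T : Set V) : Prop :=
  ∃ R R' : GPath G, W.IsColPath R ∧ W.IsColPath R' ∧ T = R.verts ∪ R'.verts ∧
    ∀ P ∈ S, (P.first ∈ R.verts ∧ P.last ∈ R'.verts) ∨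
      (P.first ∈ R'.verts ∧ P.last ∈ R.verts)

/-- A `W`-handlebar: a set of pairwise disjoint `W`-handles that is pure (pairwise in
series, pairwise nested, or pairwise crossing) and admits a frame. -/
def IsHandlebar (W : Wall G c r) (S : Set (GPath G)) : Prop :=
  (∀ P ∈ S, W.IsHandle P) ∧
  (∀ P ∈ S, ∀ Q ∈ S, P ≠ Q → Disjoint P.verts Q.verts) ∧
  (W.PureSeries S ∨ W.PureNested S ∨ W.PureCrossing S) ∧
  ∃ T, W.HandlebarFrame S T

/-- An `A`-`W`-handle: an `A`-`V(W)`-path whose endpoint in `W` lies on the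
column-boundary of `W`. -/
def IsAWHandle (W : Wall G c r) (A : Set V) (P : GPath G) : Prop :=
  0 < P.n ∧ P.first ∈ A ∧ P.last ∈ W.colBoundary ∧
    (∀ x, P.Internal x → x ∉ A ∧ x ∉ W.verts) ∧ ∀ i, P.e i ∉ W.edges

/-- `T` is a frame for the family `S` of `A`-`W`-handles: `T = V(R)` for a single path
`R` in `C₁ ∪ C_c` containing all the endpoints in `W` of the handles in `S`. -/
def AWFrame (W : Wall G c r) (S : Set (GPath G)) (T : Set V) : Prop :=
  ∃ R : GPath G, W.IsColPath R ∧ T = R.verts ∧ ∀ P ∈ S, P.last ∈ R.verts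

/-- An `A`-`W`-handlebar: a set of pairwise disjoint `A`-`W`-handles whose endpoints
in `W` all lie on the first column or all lie on the last column. -/
def IsAWHandlebar (W : Wall G c r) (A : Set V) (S : Set (GPath G)) : Prop :=
  (∀ P ∈ S, W.IsAWHandle A P) ∧
  (∀ P ∈ S, ∀ Q ∈ S, P ≠ Q → Disjoint P.verts Q.verts) ∧
  ((∀ P ∈ S, P.last ∈ W.col1.verts) ∨ ∀ P ∈ S, P.last ∈ W.colc.verts)

/-- An `N^W`-path contained in the wall `W`. -/
def IsNWPathIn (W : Wall G c r) (P : GPath G) : Prop :=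
  0 < P.n ∧ (∀ i, P.e i ∈ W.edges) ∧ P.first ∈ W.nails ∧ P.last ∈ W.nails ∧
    ∀ x, P.Internal x → x ∉ W.nails

/-- A labelled wall is strongly balanced if every `N^W`-path in `W` has `γ`-length 0. -/
def StronglyBalanced [AddCommGroup Γ] (W : Wall G c r) : Prop :=
  ∀ P : GPath G, W.IsNWPathIn P → P.glen = 0

end Wall
/-- A `Γ`-labelled `(A, k)`-ribboned wall: a wall `W` of order at least `k(m+2)`,
`W`-handlebars `P 0, …, P (m-1)`, and `A`-`W`-handlebars `Q1, Q2`, satisfying the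
conditions (A1) and (A2): `Q1` and `Q2` are equal or disjoint, the families are
pairwise disjoint and non-mixing, `|P i| ≥ k` and `|Q j| ≥ 2k`, the wall is strongly
balanced, and the paths in each family have a common `γ`-length. -/
structure RibbonedWall {V Γ : Type} [AddCommGroup Γ] (G : LabGraph V Γ)
    (A : Set V) (k : ℕ) where
  c : ℕ
  r : ℕ
  W : Wall G c r
  m : ℕ
  P : Fin m → Set (GPath G)
  Q1 : Set (GPath G)
  Q2 : Set (GPath G)
  g : Fin m → Γ
  h1 : Γ
  h2 : Γ
  wall_order : k * (m + 2) ≤ min c r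
  hb : ∀ i, W.IsHandlebar (P i)
  hq1 : W.IsAWHandlebar A Q1
  hq2 : W.IsAWHandlebar A Q2
  q_eq_or_disj : Q1 = Q2 ∨ ∀ p ∈ Q1, ∀ q ∈ Q2, Disjoint p.verts q.verts
  fam_disj : ∀ i j, i ≠ j → ∀ p ∈ P i, ∀ q ∈ P j, Disjoint p.verts q.verts
  fam_disj_q : ∀ i, ∀ p ∈ P i, ∀ q ∈ Q1 ∪ Q2, Disjoint p.verts q.verts
  nonmix : ∃ (T : Fin m → Set V) (T1 T2 : Set V),
    (∀ i, W.HandlebarFrame (P i) (T i)) ∧ W.AWFrame Q1 T1 ∧ W.AWFrame Q2 T2 ∧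
      (∀ i j, i ≠ j → Disjoint (T i) (T j)) ∧ ∀ i, Disjoint (T i) (T1 ∪ T2)
  card_P : ∀ i, ∃ inj : Fin k → GPath G, Function.Injective inj ∧ ∀ t, inj t ∈ P i
  card_Q1 : ∃ inj : Fin (2 * k) → GPath G, Function.Injective inj ∧ ∀ t, inj t ∈ Q1
  card_Q2 : ∃ inj : Fin (2 * k) → GPath G, Function.Injective inj ∧ ∀ t, inj t ∈ Q2
  balanced : W.StronglyBalanced
  lenP : ∀ i, ∀ p ∈ P i, p.glen = g i
  lenQ1 : ∀ p ∈ Q1, p.glen = h1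
  lenQ2 : ∀ p ∈ Q2, p.glen = h2

namespace RibbonedWall

variable {V Γ : Type} [AddCommGroup Γ] {G : LabGraph V Γ} {A : Set V} {k : ℕ}

/-- The vertex set of the graph `G(R) = W ∪ P₁ ∪ ⋯ ∪ P_m ∪ Q₁ ∪ Q₂`. -/
def vertexSet (R : RibbonedWall G A k) : Set V :=
  R.W.verts ∪ (⋃ i, ⋃ p ∈ R.P i, GPath.verts p) ∪ ⋃ p ∈ R.Q1 ∪ R.Q2, GPath.verts p

/-- The edge set of the graph `G(R)`. -/
def edgeSetR (R : RibbonedWall G A k) : Set G.E :=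
  R.W.edges ∪ (⋃ i, ⋃ p ∈ R.P i, GPath.edgeSet p) ∪ ⋃ p ∈ R.Q1 ∪ R.Q2, GPath.edgeSet p

/-- A path of `G` lies in the graph `G(R)`. -/
def ContainsPath (R : RibbonedWall G A k) (p : GPath G) : Prop :=
  p.verts ⊆ R.vertexSet ∧ p.edgeSet ⊆ R.edgeSetR

/-- Conditions (A3)–(A5): the ribboned wall is `Λ`-irreducible. -/
def Irreducible (R : RibbonedWall G A k) (Λ : Set Γ) : Prop :=
  ((∑ i, R.g i) + R.h1 + R.h2 ∈ Λ) ∧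
  (∀ i : Fin R.m, ∀ b₁ b₂ : ℕ, b₁ + b₂ = 2 →
    ¬ ∃ z ∈ AddSubgroup.closure (R.g '' {j | j ≠ i}), z + b₁ • R.h1 + b₂ • R.h2 ∈ Λ) ∧
  ∀ b₁ b₂ : ℕ, b₁ + b₂ = 2 → ∀ cc : Fin R.m → ℤ,
    (∑ i, cc i • R.g i) + b₁ • R.h1 + b₂ • R.h2 ∈ Λ →
    ∀ i, ¬ R.W.PureSeries (R.P i) → Odd (cc i)

/-- Conditions (A3)–(A7): the ribboned wall is a `Λ`-obstruction. -/
def IsObstruction (R : RibbonedWall G A k) (Λ : Set Γ) : Prop :=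
  R.Irreducible Λ ∧
  (∃ i, R.W.PureSeries (R.P i)) ∧
  (R.m = 1 → ∀ i : Fin R.m,
    (¬ ∃ z ∈ AddSubgroup.zmultiples (R.g i), z + 2 • R.h1 ∈ Λ) ∧
    ¬ ∃ z ∈ AddSubgroup.zmultiples (R.g i), z + 2 • R.h2 ∈ Λ)

end RibbonedWall

namespace ObsAux

abbrev VV := ℕ × ℕ

/-- The full multigraph: every pair of distinct vertices, every label, a wall tag. -/
def GG (Γ : Type) : LabGraph VV Γ where
  E := {s : Sym2 VV // ¬ s.IsDiag} × Γ × Bool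
  ends e := e.1.1
  loopless e := e.1.2
  lab e := e.2.1

variable {Γ : Type}

def mkE (p q : VV) (h : p ≠ q) (x : Γ) (b : Bool) : (GG Γ).E :=
  (⟨s(p, q), by simpa using h⟩, x, b)

def edgePath (p q : VV) (h : p ≠ q) (x : Γ) (b : Bool) : GPath (GG Γ) where
  n := 1
  v := ![p, q]
  e := fun _ => mkE p q h x b
  inj := by
    intro i j hij
    fin_cases i <;> fin_cases j <;> simp_all [eq_comm]
  incid := by
    intro i
    fin_cases i
    rfl

def trivPath (p : VV) : GPath (GG Γ) where
  n := 0
  v := fun _ => p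
  e := fun i => i.elim0
  inj := fun i j _ => Subsingleton.elim (α := Fin 1) i j
  incid := fun i => i.elim0

def segPath [Zero Γ] (f : ℕ → VV) (hf : Function.Injective f) (a n : ℕ) : GPath (GG Γ) where
  n := n
  v := fun i => f (a + i)
  e := fun i => mkE (f (a + i)) (f (a + i + 1)) (fun h => by have := hf h; omega) 0 true
  inj := by
    intro i j hij
    have := hf hij
    ext; omega
  incid := by
    intro i
    rfl

@[simp] lemma edgePath_first (p q : VV) (h : p ≠ q) (x : Γ) (b : Bool) :
    (edgePath p q h x b).first = p := rfl
@[simp] lemma edgePath_last (p q : VV) (h : p ≠ q) (x : Γ) (b : Bool) :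
    (edgePath p q h x b).last = q := rfl
lemma edgePath_verts (p q : VV) (h : p ≠ q) (x : Γ) (b : Bool) :
    (edgePath p q h x b).verts = {p, q} := by
  ext y
  simp only [GPath.verts, edgePath, Set.mem_range, Set.mem_insert_iff, Set.mem_singleton_iff]
  constructor
  · rintro ⟨i, rfl⟩
    fin_cases i <;> simp
  · rintro (rfl | rfl)
    · exact ⟨0, rfl⟩
    · exact ⟨1, rfl⟩
lemma edgePath_edgeSet (p q : VV) (h : p ≠ q) (x : Γ) (b : Bool) :
    (edgePath p q h x b).edgeSet = {mkE p q h x b} := by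
  ext y
  simp only [GPath.edgeSet, edgePath, Set.mem_range, Set.mem_singleton_iff]
  constructor
  · rintro ⟨i, rfl⟩; rfl
  · rintro rfl; exact ⟨0, rfl⟩
lemma edgePath_glen [AddCommMonoid Γ] (p q : VV) (h : p ≠ q) (x : Γ) (b : Bool) :
    (edgePath p q h x b).glen = x := by
  change ∑ _i : Fin 1, x = x
  simp
lemma edgePath_internal (p q : VV) (h : p ≠ q) (x : Γ) (b : Bool) (y : VV) :
    ¬ (edgePath p q h x b).Internal y := by
  rintro ⟨i, -, h0, h1⟩
  change Fin 2 at i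
  fin_cases i
  · exact h0 rfl
  · exact h1 rfl

def c1 (t : ℕ) : VV := (if t % 4 < 2 then 2 else 1, (t + 1) / 2 + 1)
def cc (c : ℕ) (t : ℕ) : VV :=
  (if 1 ≤ t % 4 ∧ t % 4 ≤ 2 then 2 * c else 2 * c - 1, t / 2 + 1)

lemma c1_inj : Function.Injective c1 := by
  intro s t h
  simp only [c1, Prod.mk.injEq] at h
  split_ifs at h <;> omega

lemma cc_inj (c : ℕ) (hc : 3 ≤ c) : Function.Injective (cc c) := by
  intro s t h
  simp only [cc, Prod.mk.injEq] at h
  split_ifs at h <;> omega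

lemma c1_x (t : ℕ) : 1 ≤ (c1 t).1 ∧ (c1 t).1 ≤ 2 := by
  simp only [c1]; split_ifs <;> omega
lemma cc_x (c : ℕ) (hc : 3 ≤ c) (t : ℕ) : 5 ≤ (cc c t).1 := by
  simp only [cc]; split_ifs <;> omega

lemma mem_wv (c r : ℕ) (hr : r % 2 = 1) (x y : ℕ) : (x, y) ∈ wallVerts c r ↔
    (1 ≤ x ∧ x ≤ 2 * c ∧ 1 ≤ y ∧ y ≤ r) ∧ ¬ (x = 1 ∧ y = 1) ∧ ¬ (x = 2 * c ∧ y = r) := by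
  have : Odd r := Nat.odd_iff.2 hr
  simp [wallVerts, wallDeleted, this]

lemma c1_mem (c r : ℕ) (hc : 3 ≤ c) (hr : r % 2 = 1) (t : ℕ) (ht : t ≤ 2 * r - 2) :
    c1 t ∈ wallColVerts c r 1 := by
  simp only [wallColVerts, Set.mem_ofPred_eq]
  unfold c1
  rw [mem_wv c r hr]
  simp only
  split_ifs <;> omega

lemma cc_mem (c r : ℕ) (hc : 3 ≤ c) (hr : r % 2 = 1) (t : ℕ) (ht : t ≤ 2 * r - 2) :
    cc c t ∈ wallColVerts c r c := by
  simp only [wallColVerts, Set.mem_ofPred_eq]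
  unfold cc
  rw [mem_wv c r hr]
  simp only
  split_ifs <;> omega

lemma c1_adj (c r : ℕ) (hc : 3 ≤ c) (hr : r % 2 = 1) (t : ℕ) (ht : t + 1 ≤ 2 * r - 2) :
    wallAdj c r (c1 t) (c1 (t + 1)) := by
  refine ⟨(c1_mem c r hc hr t (by omega)).1, (c1_mem c r hc hr (t + 1) ht).1, ?_⟩
  simp only [c1, Nat.odd_iff]
  split_ifs <;> omega

lemma cc_adj (c r : ℕ) (hc : 3 ≤ c) (hr : r % 2 = 1) (t : ℕ) (ht : t + 1 ≤ 2 * r - 2) :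
    wallAdj c r (cc c t) (cc c (t + 1)) := by
  refine ⟨(cc_mem c r hc hr t (by omega)).1, (cc_mem c r hc hr (t + 1) ht).1, ?_⟩
  simp only [cc, Nat.odd_iff]
  split_ifs <;> omega

lemma c1_surj (c r : ℕ) (hc : 3 ≤ c) (hr : r % 2 = 1) (p : VV) (hp : p ∈ wallColVerts c r 1) :
    ∃ t, t ≤ 2 * r - 2 ∧ c1 t = p := by
  obtain ⟨x, y⟩ := p
  simp only [wallColVerts, Set.mem_ofPred_eq] at hp
  rw [mem_wv c r hr] at hp
  by_cases h : (x + y) % 2 = 1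
  · refine ⟨2 * y - 2, by omega, ?_⟩
    simp only [c1, Prod.mk.injEq]
    split_ifs <;> omega
  · refine ⟨2 * y - 3, by omega, ?_⟩
    simp only [c1, Prod.mk.injEq]
    split_ifs <;> omega

lemma cc_surj (c r : ℕ) (hc : 3 ≤ c) (hr : r % 2 = 1) (p : VV) (hp : p ∈ wallColVerts c r c) :
    ∃ t, t ≤ 2 * r - 2 ∧ cc c t = p := by
  obtain ⟨x, y⟩ := p
  simp only [wallColVerts, Set.mem_ofPred_eq] at hp
  rw [mem_wv c r hr] at hp
  by_cases h : (x + y) % 2 = 1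
  · refine ⟨2 * y - 1, by omega, ?_⟩
    simp only [cc, Prod.mk.injEq]
    split_ifs <;> omega
  · refine ⟨2 * y - 2, by omega, ?_⟩
    simp only [cc, Prod.mk.injEq]
    split_ifs <;> omega

lemma adj_ne {c r : ℕ} {p q : VV} (h : wallAdj c r p q) : p ≠ q := by
  rintro rfl
  obtain ⟨-, -, h⟩ := h
  omega

lemma adj_symm {c r : ℕ} {p q : VV} (h : wallAdj c r p q) : wallAdj c r q p := by
  obtain ⟨h1, h2, h⟩ := h
  refine ⟨h2, h1, ?_⟩
  rcases h with ⟨h, h'⟩ | ⟨h, h'⟩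
  · exact Or.inl ⟨h.symm, h'.symm⟩
  · exact Or.inr ⟨h.symm, h'.symm⟩

open Classical in
noncomputable def bpp [Zero Γ] (p q : VV) : GPath (GG Γ) :=
  if h : p ≠ q then edgePath p q h 0 true else trivPath p

lemma bpp_eq [Zero Γ] {p q : VV} (h : p ≠ q) :
    (bpp p q : GPath (GG Γ)) = edgePath p q h 0 true := by
  simp [bpp, h]

lemma bpp_verts [Zero Γ] {p q : VV} (h : p ≠ q) :
    (bpp p q : GPath (GG Γ)).verts = {p, q} := by
  rw [bpp_eq h, edgePath_verts]

lemma seg_verts [Zero Γ] (f : ℕ → VV) (hf : Function.Injective f) (a n : ℕ) (x : VV) :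
    x ∈ (segPath f hf a n : GPath (GG Γ)).verts ↔ ∃ i, i ≤ n ∧ f (a + i) = x := by
  simp only [GPath.verts, segPath, Set.mem_range]
  constructor
  · rintro ⟨i, h⟩
    exact ⟨i, by omega, h⟩
  · rintro ⟨i, hi, h⟩
    exact ⟨⟨i, by omega⟩, h⟩

lemma seg_col [Zero Γ] (f : ℕ → VV) (hf : Function.Injective f) (c r i : ℕ) (hr3 : 3 ≤ r)
    (hm : ∀ t, t ≤ 2 * r - 2 → f t ∈ wallColVerts c r i)
    (ha : ∀ t, t + 1 ≤ 2 * r - 2 → wallAdj c r (f t) (f (t + 1)))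
    (hs : ∀ p ∈ wallColVerts c r i, ∃ t, t ≤ 2 * r - 2 ∧ f t = p) :
    (segPath f hf 0 (2 * r - 2) : GPath (GG Γ)).verts =
    {x | ∃ p q, wallAdj c r p q ∧ p ∈ wallColVerts c r i ∧ q ∈ wallColVerts c r i ∧
      x ∈ (bpp p q : GPath (GG Γ)).verts} := by
  ext x
  rw [seg_verts]
  constructor
  · rintro ⟨t, ht, rfl⟩
    rw [Nat.zero_add]
    by_cases h : t + 1 ≤ 2 * r - 2
    · refine ⟨f t, f (t + 1), ha t h, hm t ht, hm _ h, ?_⟩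
      rw [bpp_verts (adj_ne (ha t h))]; simp
    · obtain ⟨s, rfl⟩ : ∃ s, t = s + 1 := ⟨t - 1, by omega⟩
      refine ⟨f s, f (s + 1), ha s ht, hm s (by omega), hm _ ht, ?_⟩
      rw [bpp_verts (adj_ne (ha s ht))]; simp
  · rintro ⟨p, q, hpq, hp, hq, hx⟩
    rw [bpp_verts (adj_ne hpq)] at hx
    simp only [Nat.zero_add]
    rcases hx with rfl | rfl
    · exact hs _ hp
    · exact hs _ hq

lemma seg_col_e [Zero Γ] (f : ℕ → VV) (hf : Function.Injective f) (c r i : ℕ)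
    (hm : ∀ t, t ≤ 2 * r - 2 → f t ∈ wallColVerts c r i)
    (ha : ∀ t, t + 1 ≤ 2 * r - 2 → wallAdj c r (f t) (f (t + 1)))
    (t : Fin (segPath f hf 0 (2 * r - 2) : GPath (GG Γ)).n) :
    ∃ p q, wallAdj c r p q ∧ p ∈ wallColVerts c r i ∧ q ∈ wallColVerts c r i ∧
      (segPath f hf 0 (2 * r - 2) : GPath (GG Γ)).e t ∈ (bpp p q : GPath (GG Γ)).edgeSet := by
  have ht : (t : ℕ) + 1 ≤ 2 * r - 2 := t.2
  refine ⟨f (0 + t), f (0 + t + 1), ?_, ?_, ?_, ?_⟩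
  · simpa using ha t ht
  · simpa using hm t (by omega)
  · simpa using hm _ ht
  · have : f (0 + t) ≠ f (0 + t + 1) := by simpa using adj_ne (ha t ht)
    rw [bpp_eq this, edgePath_edgeSet]
    rfl

noncomputable def wall (Γ : Type) [Zero Γ] (c r : ℕ) (hc : 3 ≤ c) (hr : 3 ≤ r)
    (ho : r % 2 = 1) : Wall (GG Γ) c r where
  hc := hc
  hr := hr
  nail := id
  bp := bpp
  nail_injOn := Function.injective_id.injOn
  bp_pos p q h := by rw [bpp_eq (adj_ne h)]; exact Nat.one_pos
  bp_first p q h := by rw [bpp_eq (adj_ne h)]; rfl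
  bp_last p q h := by rw [bpp_eq (adj_ne h)]; rfl
  bp_symm_v p q h := by
    rw [bpp_verts (adj_ne h), bpp_verts (adj_ne h).symm, Set.pair_comm]
  bp_symm_e p q h := by
    rw [bpp_eq (adj_ne h), bpp_eq (adj_ne h).symm, edgePath_edgeSet, edgePath_edgeSet]
    refine congrArg (fun z => ({z} : Set (GG Γ).E)) ?_
    exact Prod.ext (Subtype.ext Sym2.eq_swap) rfl
  bp_disj p q p' q' h h' _ := by
    rw [bpp_verts (adj_ne h), bpp_verts (adj_ne h')]
    simp
  nail_avoid p q h w _ h1 h2 := by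
    rw [bpp_verts (adj_ne h)]
    simp [h1, h2]
  col1 := segPath c1 c1_inj 0 (2 * r - 2)
  colc := segPath (cc c) (cc_inj c hc) 0 (2 * r - 2)
  col1_verts := seg_col _ _ c r 1 hr (c1_mem c r hc ho) (c1_adj c r hc ho) (c1_surj c r hc ho)
  colc_verts := seg_col _ _ c r c hr (cc_mem c r hc ho) (cc_adj c r hc ho) (cc_surj c r hc ho)
  col1_edges := seg_col_e _ _ c r 1 (c1_mem c r hc ho) (c1_adj c r hc ho)
  colc_edges := seg_col_e _ _ c r c (cc_mem c r hc ho) (cc_adj c r hc ho)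
  col1_first := by
    change c1 0 = (2, 1)
    simp [c1]
  colc_first := by
    change cc c 0 = (2 * c - 1, 1)
    simp [cc]

def hP (x : Γ) (s : ℕ) : GPath (GG Γ) :=
  edgePath (c1 (2 * s)) (c1 (2 * s + 1)) (fun h => by have := c1_inj h; omega) x false

def hQ (x : Γ) (c : ℕ) (hc : 3 ≤ c) (s : ℕ) : GPath (GG Γ) :=
  edgePath (0, s) (cc c s) (fun h => by
    have := cc_x c hc s; rw [← h] at this; simp at this) x false

def famP (x : Γ) (a k : ℕ) : Set (GPath (GG Γ)) := {p | ∃ t, t < k ∧ p = hP x (a + t)}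
def famQ (c : ℕ) (hc : 3 ≤ c) (x : Γ) (a k : ℕ) : Set (GPath (GG Γ)) :=
  {p | ∃ t, t < k ∧ p = hQ x c hc (a + t)}

section
variable [AddCommGroup Γ] {c r : ℕ} (hc : 3 ≤ c) (hr : 3 ≤ r) (ho : r % 2 = 1)

lemma wall_edge {e : (GG Γ).E} (h : e ∈ (wall Γ c r hc hr ho).edges) :
    e.2.1 = 0 ∧ e.2.2 = true := by
  obtain ⟨p, q, hpq, he⟩ := h
  change e ∈ (bpp p q : GPath (GG Γ)).edgeSet at he
  rw [bpp_eq (adj_ne hpq), edgePath_edgeSet] at he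
  rw [Set.mem_singleton_iff] at he
  subst he
  exact ⟨rfl, rfl⟩

lemma wall_bal : (wall Γ c r hc hr ho).StronglyBalanced := by
  rintro P ⟨-, h, -⟩
  exact Finset.sum_eq_zero fun i _ => (wall_edge hc hr ho (h i)).1

lemma col1_mem (t : ℕ) (ht : t ≤ 2 * r - 2) : c1 t ∈ (wall Γ c r hc hr ho).col1.verts :=
  (seg_verts c1 c1_inj _ _ _).2 ⟨t, ht, by rw [Nat.zero_add]⟩

lemma colc_mem (t : ℕ) (ht : t ≤ 2 * r - 2) : cc c t ∈ (wall Γ c r hc hr ho).colc.verts :=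
  (seg_verts (cc c) (cc_inj c hc) _ _ _).2 ⟨t, ht, by rw [Nat.zero_add]⟩

lemma verts_of_col1 {x : VV} (h : x ∈ (wall Γ c r hc hr ho).col1.verts) :
    x ∈ (wall Γ c r hc hr ho).verts := by
  rw [Wall.col1_verts] at h
  obtain ⟨p, q, h1, -, -, h2⟩ := h
  exact ⟨p, q, h1, h2⟩

lemma edge_ne_wall (p q : VV) (h : p ≠ q) (x : Γ) (i) :
    (edgePath p q h x false).e i ∉ (wall Γ c r hc hr ho).edges := by
  intro h'
  have := (wall_edge hc hr ho h').2
  exact Bool.false_ne_true this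

lemma before1 (s t : ℕ) (h : s < t) (ht : t ≤ 2 * r - 2) :
    (wall Γ c r hc hr ho).bLT (c1 s) (c1 t) := by
  refine Or.inr (Or.inl ⟨⟨s, ?_⟩, ⟨t, ?_⟩, h, ?_, ?_⟩)
  · change s < 2 * r - 2 + 1; omega
  · change t < 2 * r - 2 + 1; omega
  · change c1 (0 + s) = _; rw [Nat.zero_add]
  · change c1 (0 + t) = _; rw [Nat.zero_add]

lemma seg_colPath (a n : ℕ) (h : a + n ≤ 2 * r - 2) :
    (wall Γ c r hc hr ho).IsColPath (segPath c1 c1_inj a n) := by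
  constructor
  · intro x hx
    obtain ⟨i, hi, rfl⟩ := (seg_verts _ _ _ _ _).1 hx
    exact Or.inl (col1_mem hc hr ho _ (by omega))
  · intro i
    have hi : (i : ℕ) < n := i.2
    refine Or.inl ⟨⟨a + i, ?_⟩, ?_⟩
    · change a + (i : ℕ) < 2 * r - 2; omega
    · refine Prod.ext (Subtype.ext ?_) rfl
      change s(c1 (0 + (a + i)), c1 (0 + (a + i) + 1)) = s(c1 (a + i), c1 (a + i + 1))
      simp only [Nat.zero_add]

lemma colc_colPath : (wall Γ c r hc hr ho).IsColPath (wall Γ c r hc hr ho).colc :=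
  ⟨fun _ hx => Or.inr hx, fun i => Or.inr ⟨i, rfl⟩⟩

lemma hP_verts (x : Γ) (s : ℕ) (y : VV) (h : y ∈ (hP x s).verts) : ∃ u, u / 2 = s ∧ y = c1 u := by
  rw [hP, edgePath_verts] at h
  rcases h with rfl | rfl
  · exact ⟨_, by omega, rfl⟩
  · exact ⟨_, by omega, rfl⟩

lemma hQ_verts (x : Γ) (s : ℕ) (y : VV) (h : y ∈ (hQ x c hc s).verts) : y = (0, s) ∨ y = cc c s := by
  rw [hQ, edgePath_verts] at h
  exact h

lemma hP_disj (x y : Γ) (s t : ℕ) (h : s ≠ t) : Disjoint (hP x s).verts (hP y t).verts := by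
  rw [Set.disjoint_left]
  intro z h1 h2
  obtain ⟨u, hu, rfl⟩ := hP_verts _ _ _ h1
  obtain ⟨v, hv, h3⟩ := hP_verts _ _ _ h2
  have := c1_inj h3
  omega

lemma hQ_disj (x y : Γ) (s t : ℕ) (h : s ≠ t) :
    Disjoint (hQ x c hc s).verts (hQ y c hc t).verts := by
  rw [Set.disjoint_left]
  intro z h1 h2
  have hs := cc_x c hc s
  have ht := cc_x c hc t
  rcases hQ_verts hc _ _ _ h1 with rfl | rfl <;> rcases hQ_verts hc _ _ _ h2 with h3 | h3
  · simp at h3; omega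
  · rw [← h3] at ht; simp at ht
  · rw [h3] at hs; simp at hs
  · exact h (cc_inj c hc h3)

lemma hPQ_disj (x y : Γ) (s t : ℕ) :
    Disjoint (hP x s).verts (hQ y c hc t).verts := by
  rw [Set.disjoint_left]
  intro z h1 h2
  have ht := cc_x c hc t
  obtain ⟨u, hu, rfl⟩ := hP_verts _ _ _ h1
  have hs := c1_x u
  rcases hQ_verts hc _ _ _ h2 with h3 | h3 <;> rw [h3] at hs
  · simp at hs
  · omega

lemma hP_handle (x : Γ) (s : ℕ) (hs : 2 * s + 1 ≤ 2 * r - 2) :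
    (wall Γ c r hc hr ho).IsHandle (hP x s) := by
  have h1 := col1_mem (Γ := Γ) hc hr ho (2 * s) (by omega)
  have h2 := col1_mem (Γ := Γ) hc hr ho (2 * s + 1) (by omega)
  exact ⟨⟨Nat.one_pos, verts_of_col1 hc hr ho h1, verts_of_col1 hc hr ho h2,
    fun y hy => absurd hy (edgePath_internal _ _ _ _ _ _),
    edge_ne_wall hc hr ho _ _ _ _⟩, Or.inl h1, Or.inl h2⟩

lemma hQ_handle (x : Γ) (s : ℕ) (hs : s ≤ 2 * r - 2) :
    (wall Γ c r hc hr ho).IsAWHandle {p | p.1 = 0} (hQ x c hc s) :=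
  ⟨Nat.one_pos, rfl, Or.inr (colc_mem hc hr ho s hs),
    fun y hy => absurd hy (edgePath_internal _ _ _ _ _ _),
    edge_ne_wall hc hr ho _ _ _ _⟩

lemma hP_series (x : Γ) (s t : ℕ) (h : s ≠ t) (hs : 2 * s + 1 ≤ 2 * r - 2)
    (ht : 2 * t + 1 ≤ 2 * r - 2) :
    (wall Γ c r hc hr ho).SeriesPair (hP x s) (hP x t) := by
  refine ⟨c1 (2 * s), c1 (2 * s + 1), c1 (2 * t), c1 (2 * t + 1), rfl, rfl,
    before1 hc hr ho _ _ (by omega) hs, before1 hc hr ho _ _ (by omega) ht, ?_⟩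
  rcases lt_or_gt_of_ne h with h | h
  · exact Or.inl (before1 hc hr ho _ _ (by omega) (by omega))
  · exact Or.inr (before1 hc hr ho _ _ (by omega) (by omega))

lemma hP_inj (x : Γ) : Function.Injective (hP x) := by
  intro s t h
  have h' : c1 (2 * s) = c1 (2 * t) := congrArg GPath.first h
  have := c1_inj h'
  omega

lemma hQ_inj (x : Γ) : Function.Injective (hQ x c hc) := by
  intro s t h
  have h' : ((0, s) : VV) = (0, t) := congrArg GPath.first h
  simpa using h'

lemma famP_series (x : Γ) (a k : ℕ) (h : a + k < r) :
    (wall Γ c r hc hr ho).PureSeries (famP x a k) := by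
  rintro _ ⟨s, hs, rfl⟩ _ ⟨t, ht, rfl⟩ hst
  exact hP_series hc hr ho x _ _ (fun h => hst (by rw [h])) (by omega) (by omega)

lemma famP_frame (x : Γ) (a k : ℕ) (hk : 0 < k) (h : a + k < r) :
    (wall Γ c r hc hr ho).HandlebarFrame (famP x a k)
      (segPath c1 c1_inj (2 * a) (2 * k - 1) : GPath (GG Γ)).verts := by
  refine ⟨_, _, seg_colPath hc hr ho (2 * a) (2 * k - 1) (by omega),
    seg_colPath hc hr ho (2 * a) (2 * k - 1) (by omega), (Set.union_self _).symm, ?_⟩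
  rintro _ ⟨s, hs, rfl⟩
  refine Or.inl ⟨(seg_verts _ _ _ _ _).2 ⟨2 * s, by omega, ?_⟩,
    (seg_verts _ _ _ _ _).2 ⟨2 * s + 1, by omega, ?_⟩⟩
  · change _ = c1 (2 * (a + s)); congr 1; omega
  · change _ = c1 (2 * (a + s) + 1); congr 1; omega

lemma famP_bar (x : Γ) (a k : ℕ) (hk : 0 < k) (h : a + k < r) :
    (wall Γ c r hc hr ho).IsHandlebar (famP x a k) := by
  refine ⟨?_, ?_, Or.inl (famP_series hc hr ho x a k h), _, famP_frame hc hr ho x a k hk h⟩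
  · rintro _ ⟨s, hs, rfl⟩
    exact hP_handle hc hr ho x _ (by omega)
  · rintro _ ⟨s, hs, rfl⟩ _ ⟨t, ht, rfl⟩ hst
    exact hP_disj x x _ _ (fun h => hst (by rw [h]))

lemma famQ_bar (x : Γ) (a k : ℕ) (h : a + k < r) :
    (wall Γ c r hc hr ho).IsAWHandlebar {p | p.1 = 0} (famQ c hc x a k) := by
  refine ⟨?_, ?_, Or.inr ?_⟩
  · rintro _ ⟨s, hs, rfl⟩
    exact hQ_handle hc hr ho x _ (by omega)
  · rintro _ ⟨s, hs, rfl⟩ _ ⟨t, ht, rfl⟩ hst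
    exact hQ_disj hc x x _ _ (fun h => hst (by rw [h]))
  · rintro _ ⟨s, hs, rfl⟩
    exact colc_mem hc hr ho _ (by omega)

lemma famQ_frame (x : Γ) (a k : ℕ) (h : a + k < r) :
    (wall Γ c r hc hr ho).AWFrame (famQ c hc x a k) (wall Γ c r hc hr ho).colc.verts := by
  refine ⟨_, colc_colPath hc hr ho, rfl, ?_⟩
  rintro _ ⟨s, hs, rfl⟩
  exact colc_mem hc hr ho _ (by omega)

end

lemma idx_eq {k i j s t : ℕ} (hs : s < k) (ht : t < k) (h : i * k + s = j * k + t) : i = j := by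
  rcases lt_trichotomy i j with h1 | h1 | h1
  · have := Nat.mul_le_mul_right k (Nat.succ_le_of_lt h1)
    rw [Nat.succ_mul] at this; omega
  · exact h1
  · have := Nat.mul_le_mul_right k (Nat.succ_le_of_lt h1)
    rw [Nat.succ_mul] at this; omega

theorem exists_ribboned [AddCommGroup Γ] (k : ℕ) (hk : 0 < k) (m : ℕ) (g : Fin m → Γ)
    (h1 h2 : Γ) : ∃ (R : RibbonedWall (GG Γ) {p : VV | p.1 = 0} k) (e : R.m = m),
      (R.g = fun i => g (Fin.cast e i)) ∧ R.h1 = h1 ∧ R.h2 = h2 ∧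
      ∀ i, R.W.PureSeries (R.P i) := by
  obtain ⟨N, hN⟩ : ∃ N, N = k * (m + 2) := ⟨_, rfl⟩
  have hN' : N = m * k + 2 * k := by rw [hN]; ring
  have hr : 3 ≤ 2 * N + 1 := by omega
  have ho : (2 * N + 1) % 2 = 1 := by omega
  have hb : ∀ i : Fin m, i * k + k < 2 * N + 1 := by
    intro i
    have := Nat.mul_le_mul_right k (Nat.succ_le_of_lt i.2)
    rw [Nat.succ_mul] at this
    omega
  refine ⟨{
    c := 2 * N + 1
    r := 2 * N + 1
    W := wall Γ _ _ hr hr ho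
    m := m
    P := fun i => famP (g i) (i * k) k
    Q1 := famQ _ hr h1 0 (2 * k)
    Q2 := famQ _ hr h2 (2 * k) (2 * k)
    g := g
    h1 := h1
    h2 := h2
    wall_order := by rw [← hN, min_self]; omega
    hb := fun i => famP_bar hr hr ho _ _ _ hk (hb i)
    hq1 := famQ_bar hr hr ho _ _ _ (by omega)
    hq2 := famQ_bar hr hr ho _ _ _ (by omega)
    q_eq_or_disj := Or.inr (by
      rintro _ ⟨s, hs, rfl⟩ _ ⟨t, ht, rfl⟩
      exact hQ_disj hr _ _ _ _ (by omega))
    fam_disj := by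
      rintro i j hij _ ⟨s, hs, rfl⟩ _ ⟨t, ht, rfl⟩
      exact hP_disj _ _ _ _ fun h => hij (Fin.ext (idx_eq hs ht h))
    fam_disj_q := by
      rintro i _ ⟨s, hs, rfl⟩ _ (⟨t, ht, rfl⟩ | ⟨t, ht, rfl⟩)
      · exact hPQ_disj hr _ _ _ _
      · exact hPQ_disj hr _ _ _ _
    nonmix := by
      refine ⟨_, _, _, fun i => famP_frame hr hr ho _ _ _ hk (hb i),
        famQ_frame hr hr ho _ _ _ (by omega), famQ_frame hr hr ho _ _ _ (by omega), ?_, ?_⟩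
      · intro i j hij
        rw [Set.disjoint_left]
        intro x hx hy
        obtain ⟨s, hs, rfl⟩ := (seg_verts _ _ _ _ _).1 hx
        obtain ⟨t, ht, h⟩ := (seg_verts _ _ _ _ _).1 hy
        have h3 := c1_inj h
        refine hij (Fin.ext (idx_eq (k := k) (s := s / 2) (t := t / 2) ?_ ?_ ?_)) <;> omega
      · intro i
        rw [Set.union_self, Set.disjoint_left]
        intro x hx hy
        obtain ⟨s, hs, rfl⟩ := (seg_verts _ _ _ _ _).1 hx
        obtain ⟨t, ht, h⟩ := (seg_verts (cc _) (cc_inj _ hr) _ _ _).1 hy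
        have h3 := c1_x (2 * (i * k) + s)
        have h4 := cc_x _ hr (0 + t)
        rw [h] at h4
        omega
    card_P := fun i => ⟨fun t => hP (g i) (i * k + t), fun s t h => by
      have := hP_inj _ h
      ext; omega, fun t => ⟨t, t.2, rfl⟩⟩
    card_Q1 := ⟨fun t => hQ h1 _ hr (0 + t), fun s t h => by
      have := hQ_inj hr _ h
      ext; omega, fun t => ⟨t, t.2, rfl⟩⟩
    card_Q2 := ⟨fun t => hQ h2 _ hr (2 * k + t), fun s t h => by
      have := hQ_inj hr _ h
      ext; omega, fun t => ⟨t, t.2, rfl⟩⟩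
    balanced := wall_bal hr hr ho
    lenP := by
      rintro i _ ⟨s, hs, rfl⟩
      exact edgePath_glen _ _ _ _ _
    lenQ1 := by
      rintro _ ⟨s, hs, rfl⟩
      exact edgePath_glen _ _ _ _ _
    lenQ2 := by
      rintro _ ⟨s, hs, rfl⟩
      exact edgePath_glen _ _ _ _ _ }, rfl, rfl, rfl, rfl, ?_⟩
  intro i
  exact famP_series hr hr ho _ _ _ (hb i)

theorem exists_obs [AddCommGroup Γ] (Λ : Set Γ) (h : ¬ EPCondition Λ) (k : ℕ) (hk : 0 < k) :
    ∃ R : RibbonedWall (GG Γ) {p : VV | p.1 = 0} k, R.IsObstruction Λ := by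
  by_cases h1 : EP1 Λ
  · have h2 : ¬ EP2 Λ := fun h2 => h ⟨h1, h2⟩
    simp only [EP2, not_forall, not_or] at h2
    obtain ⟨a, b, c, habc, hb, hc⟩ := h2
    obtain ⟨R, e, hg, e1, e2, hs⟩ := exists_ribboned k hk 2 ![b, c] a a
    refine ⟨R, ?_⟩
    obtain ⟨c', r', W, m, P, Q1, Q2, g, g1, g2, _, _, _, _, _, _, _, _, _, _, _, _, _, _, _⟩ := R
    dsimp only at e hg e1 e2 hs
    subst e e1 e2
    have hg : g = ![b, c] := hg
    subst hg
    refine ⟨⟨?_, ?_, ?_⟩, ⟨0, hs _⟩, fun h => absurd (show (2 : ℕ) = 1 from h) (by decide)⟩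
    · have : b + c + g2 + g2 = 2 • g2 + b + c := by rw [two_nsmul]; abel
      simpa [this] using habc
    · dsimp only
      rintro i b1 b2 hb12 ⟨z, hz, hzΛ⟩
      rw [add_assoc, ← add_nsmul, hb12, add_comm] at hzΛ
      fin_cases i
      · refine hc ⟨z, ?_, hzΛ⟩
        rw [AddSubgroup.zmultiples_eq_closure]
        refine AddSubgroup.closure_mono ?_ hz
        rintro _ ⟨j, hj, rfl⟩
        fin_cases j
        · exact absurd rfl hj
        · rfl
      · refine hb ⟨z, ?_, hzΛ⟩
        rw [AddSubgroup.zmultiples_eq_closure]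
        refine AddSubgroup.closure_mono ?_ hz
        rintro _ ⟨j, hj, rfl⟩
        fin_cases j
        · rfl
        · exact absurd rfl hj
    · intro _ _ _ _ _ i hi
      exact absurd (hs i) hi
  · simp only [EP1, not_forall, not_or] at h1
    obtain ⟨a, b, c, habc, hab, ha, hb⟩ := h1
    obtain ⟨R, e, hg, e1, e2, hs⟩ := exists_ribboned k hk 1 ![c] a b
    refine ⟨R, ?_⟩
    obtain ⟨c', r', W, m, P, Q1, Q2, g, g1, g2, _, _, _, _, _, _, _, _, _, _, _, _, _, _, _⟩ := R
    dsimp only at e hg e1 e2 hs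
    subst e e1 e2
    have hg : g = ![c] := hg
    subst hg
    refine ⟨⟨?_, ?_, ?_⟩, ⟨0, hs _⟩, fun _ i => ?_⟩
    · have : c + g1 + g2 = g1 + g2 + c := by abel
      simpa [this] using habc
    · dsimp only
      rintro i b1 b2 hb12 ⟨z, hz, hzΛ⟩
      have he : {j : Fin 1 | j ≠ i} = ∅ := by
        ext j; simp [Subsingleton.elim j i]
      rw [he, Set.image_empty, AddSubgroup.closure_empty, AddSubgroup.mem_bot] at hz
      subst hz
      have : b1 = 0 ∧ b2 = 2 ∨ b1 = 1 ∧ b2 = 1 ∨ b1 = 2 ∧ b2 = 0 := by omega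
      rcases this with ⟨rfl, rfl⟩ | ⟨rfl, rfl⟩ | ⟨rfl, rfl⟩
      · exact hb ⟨0, zero_mem _, by simpa using hzΛ⟩
      · exact hab (by simpa using hzΛ)
      · exact ha ⟨0, zero_mem _, by simpa using hzΛ⟩
    · intro _ _ _ _ _ i hi
      exact absurd (hs i) hi
    · dsimp only
      have hi : i = 0 := Subsingleton.elim (α := Fin 1) _ _
      subst hi
      constructor
      · rintro ⟨z, hz, hz'⟩
        exact ha ⟨z, hz, by rwa [add_comm]⟩
      · rintro ⟨z, hz, hz'⟩
        exact hb ⟨z, hz, by rwa [add_comm]⟩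

theorem not_EP_of_obs [AddCommGroup Γ] (Λ : Set Γ) {V : Type} {G : LabGraph V Γ} {A : Set V}
    {k : ℕ} (R : RibbonedWall G A k) (hR : R.IsObstruction Λ) : ¬ EPCondition Λ := by
  rintro ⟨H1, H2⟩
  obtain ⟨⟨A3, A4, A5⟩, ⟨i, hi⟩, A7⟩ := hR
  have gmem : ∀ j l : Fin R.m, j ≠ l →
      R.g j ∈ AddSubgroup.closure (R.g '' {x | x ≠ l}) := fun j l h =>
    AddSubgroup.subset_closure ⟨j, h, rfl⟩
  have smem : ∀ l : Fin R.m, ∑ j ∈ Finset.univ.erase l, R.g j ∈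
      AddSubgroup.closure (R.g '' {x | x ≠ l}) := fun l =>
    AddSubgroup.sum_mem _ fun j hj => gmem j l (Finset.ne_of_mem_erase hj)
  have split : ∀ l : Fin R.m, ∑ j, R.g j = R.g l + ∑ j ∈ Finset.univ.erase l, R.g j := fun l =>
    (Finset.add_sum_erase _ _ (Finset.mem_univ l)).symm
  by_cases hns : ∃ j, ¬ R.W.PureSeries (R.P j)
  · obtain ⟨j, hj⟩ := hns
    have hij : j ≠ i := by rintro rfl; exact hj hi
    rcases H1 R.h1 (R.h2 + R.g j) (∑ l ∈ Finset.univ.erase j, R.g l) (by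
      rw [split j] at A3
      convert A3 using 1; abel) with h | ⟨z, hz, h⟩ | ⟨z, hz, h⟩
    · refine A4 i 1 1 rfl ⟨R.g j, gmem j i hij, ?_⟩
      convert h using 1; simp only [one_nsmul]; abel
    · refine A4 j 2 0 rfl ⟨z, ?_, ?_⟩
      · exact (AddSubgroup.zmultiples_le_of_mem (smem j)) hz
      · convert h using 1; simp only [zero_nsmul]; abel
    · obtain ⟨n, rfl⟩ := AddSubgroup.mem_zmultiples_iff.1 hz
      have := A5 0 2 rfl (fun l => if l = j then 2 else n) (by
        convert h using 1
        rw [← Finset.add_sum_erase _ _ (Finset.mem_univ j), Finset.smul_sum]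
        rw [Finset.sum_congr rfl (g := fun l => n • R.g l) (fun l hl => by
          rw [if_neg (Finset.ne_of_mem_erase hl)])]
        simp only [if_true, zero_nsmul, two_nsmul, two_zsmul]; abel) j hj
      rw [if_pos rfl] at this
      exact absurd this (by decide)
  · push Not at hns
    have hm : R.m = 1 ∨ ∃ j, j ≠ i := by
      by_contra! hcon
      refine hcon.1 ?_
      have : ∀ j, j = i := hcon.2
      have h1 : Fintype.card (Fin R.m) = 1 := Fintype.card_eq_one_iff.2 ⟨i, this⟩
      simpa using h1
    have hab : R.h1 + R.h2 ∉ Λ := fun h => A4 i 1 1 rfl ⟨0, zero_mem _, by simpa using h⟩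
    have key : ∀ (x : Γ) (n : ℤ), (x = R.h1 ∨ x = R.h2) → 2 • x + n • ∑ j, R.g j ∈ Λ → False := by
      intro x n hx h
      have A4' : ∀ l, ∀ z ∈ AddSubgroup.closure (R.g '' {x | x ≠ l}), 2 • x + z ∉ Λ := by
        intro l z hz h'
        rcases hx with rfl | rfl
        · exact A4 l 2 0 rfl ⟨z, hz, by simpa [add_comm] using h'⟩
        · exact A4 l 0 2 rfl ⟨z, hz, by simpa [add_comm] using h'⟩
      rcases hm with hm | ⟨j, hj⟩
      · have hsum : ∑ j, R.g j = R.g i := by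
          rw [split i]
          have : Finset.univ.erase i = ∅ := by
            ext j
            have : j = i := by ext; omega
            simp [this]
          simp [this]
        rw [hsum] at h
        have hz : n • R.g i ∈ AddSubgroup.zmultiples (R.g i) :=
          AddSubgroup.mem_zmultiples_iff.2 ⟨n, rfl⟩
        rcases hx with rfl | rfl
        · exact (A7 hm i).1 ⟨_, hz, by rwa [add_comm]⟩
        · exact (A7 hm i).2 ⟨_, hz, by rwa [add_comm]⟩
      · rcases H2 x (n • R.g i) (n • ∑ l ∈ Finset.univ.erase i, R.g l) (by
          rw [split i, smul_add, ← add_assoc] at h; exact h) with ⟨z, hz, h'⟩ | ⟨z, hz, h'⟩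
        · exact A4' j z ((AddSubgroup.zmultiples_le_of_mem
            (AddSubgroup.zsmul_mem _ (gmem i j hj.symm) n)) hz) h'
        · exact A4' i z ((AddSubgroup.zmultiples_le_of_mem
            (AddSubgroup.zsmul_mem _ (smem i) n)) hz) h'
    rcases H1 R.h1 R.h2 (∑ j, R.g j) (by convert A3 using 1; abel) with h | ⟨z, hz, h⟩ | ⟨z, hz, h⟩
    · exact hab h
    · obtain ⟨n, rfl⟩ := AddSubgroup.mem_zmultiples_iff.1 hz
      exact key _ n (Or.inl rfl) h
    · obtain ⟨n, rfl⟩ := AddSubgroup.mem_zmultiples_iff.1 hz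
      exact key _ n (Or.inr rfl) h

end ObsAux

/-- A `Λ`-obstruction exists if and only if `Λ` does not satisfy the
Erdős–Pósa condition; moreover, if `Λ` fails the Erdős–Pósa condition, then for every
positive integer `k` there is a `Λ`-obstruction that is an `(A, k)`-ribboned wall. -/
theorem obstruction_exists_iff_not_EPCondition
    (Γ : Type) [AddCommGroup Γ] [Fintype Γ] (Λ : Set Γ) :
    ((∃ (V : Type) (G : LabGraph V Γ) (A : Set V) (k : ℕ), 0 < k ∧
      ∃ R : RibbonedWall G A k, R.IsObstruction Λ) ↔ ¬ EPCondition Λ) ∧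
    (¬ EPCondition Λ → ∀ k : ℕ, 0 < k →
      ∃ (V : Type) (G : LabGraph V Γ) (A : Set V) (R : RibbonedWall G A k),
        R.IsObstruction Λ) := by
  refine ⟨⟨?_, fun h => ?_⟩, fun h k hk => ?_⟩
  · rintro ⟨V, G, A, k, -, R, hR⟩
    exact ObsAux.not_EP_of_obs Λ R hR
  · obtain ⟨R, hR⟩ := ObsAux.exists_obs Λ h 1 Nat.one_pos
    exact ⟨_, _, _, 1, Nat.one_pos, R, hR⟩
  · obtain ⟨R, hR⟩ := ObsAux.exists_obs Λ h k hk
    exact ⟨_, _, _, R, hR⟩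
end

section
/- Let Γ be a finite abelian group, let Λ ⊆ Γ, and let A and B be vertex sets. If ∅ ≠ Λ ⊊ Γ, then the family of Λ-allowable A-B-paths does not satisfy the Erdős–Pósa property; if Λ = Γ, then it does satisfy the Erdős–Pósa property. -/
/-- An `A`-`B`-path: a path with at least one edge, one endpoint in `A`, the other
endpoint in `B`, and internally disjoint from `A ∪ B`. -/
def IsABPath {V Γ : Type} {G : LabGraph V Γ} (A B : Set V) (P : GPath G) : Prop :=
  0 < P.n ∧ ((P.first ∈ A ∧ P.last ∈ B) ∨ (P.first ∈ B ∧ P.last ∈ A)) ∧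
    ∀ x, P.Internal x → x ∉ A ∪ B

/-- A weak `A`-`B`-path: a path with at least one edge, one endpoint in `A` and the
other endpoint in `B`; internal vertices may lie in `A ∪ B`. -/
def IsWeakABPath {V Γ : Type} {G : LabGraph V Γ} (A B : Set V) (P : GPath G) : Prop :=
  0 < P.n ∧ ((P.first ∈ A ∧ P.last ∈ B) ∨ (P.first ∈ B ∧ P.last ∈ A))

section Part1
open Finset

/-- grid graph on `ℕ × ℕ` (row, column) -/
def gridG {Γ : Type} [AddCommGroup Γ] (μ g : Γ) : LabGraph (ℕ × ℕ) Γ where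
  E := (ℕ × ℕ) × Bool
  ends := fun e => if e.2 then s(e.1, (e.1.1, e.1.2 + 1)) else s(e.1, (e.1.1 + 1, e.1.2))
  loopless := by
    rintro ⟨⟨r, c⟩, b⟩
    cases b <;> simp
  lab := fun e => if e.2 then (if e.1.2 = 0 then μ else if e.1.1 = 0 ∧ e.1.2 % 2 = 1 then g else 0) else 0

namespace GPath
variable {V Γ : Type} {G : LabGraph V Γ}

def rev (P : GPath G) : GPath G where
  n := P.n
  v := fun i => P.v i.rev
  e := fun i => P.e i.rev
  inj := fun i j h => Fin.rev_injective (P.inj h)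
  incid := by
    intro i
    rw [P.incid, Sym2.eq_swap]
    simp [Fin.rev_castSucc, Fin.rev_succ]

theorem rev_verts (P : GPath G) : P.rev.verts = P.verts := by
  ext x
  constructor
  · rintro ⟨i, rfl⟩; exact ⟨i.rev, rfl⟩
  · rintro ⟨i, rfl⟩; exact ⟨i.rev, by simp [rev]⟩

theorem rev_glen [AddCommMonoid Γ] (P : GPath G) : P.rev.glen = P.glen := by
  unfold glen
  exact Equiv.sum_comp Fin.revPerm (fun i => G.lab (P.e i))

theorem rev_first (P : GPath G) : P.rev.first = P.last := congrArg P.v (Fin.rev_zero _)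
theorem rev_last (P : GPath G) : P.rev.last = P.first := congrArg P.v (Fin.rev_last _)

theorem rev_internal (P : GPath G) (x : V) (h : P.rev.Internal x) : P.Internal x := by
  obtain ⟨i, h1, h2, h3⟩ := h
  refine ⟨i.rev, h1, ?_, ?_⟩
  · intro h; apply h3; rw [← Fin.rev_rev i, h]; simp [rev]
  · intro h; apply h2; rw [← Fin.rev_rev i, h]; exact Fin.rev_last _

end GPath

/-- Normalised A-B path. -/
theorem exists_normal {V Γ : Type} [AddCommMonoid Γ] {G : LabGraph V Γ} {A B : Set V} (P : GPath G)
    (h : IsABPath A B P) : ∃ Q : GPath G, Q.verts = P.verts ∧ Q.glen = P.glen ∧ 0 < Q.n ∧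
      Q.first ∈ A ∧ Q.last ∈ B ∧ ∀ x, Q.Internal x → x ∉ A ∪ B := by
  obtain ⟨h0, h1 | h1, h2⟩ := h
  · exact ⟨P, rfl, rfl, h0, h1.1, h1.2, h2⟩
  · refine ⟨P.rev, P.rev_verts, P.rev_glen, h0, ?_, ?_, fun x hx => h2 x (P.rev_internal x hx)⟩
    · rw [P.rev_first]; exact h1.2
    · rw [P.rev_last]; exact h1.1

/-- adjacency in the grid -/
def gadj (u v : ℕ × ℕ) : Prop :=
  (u.1 = v.1 ∧ (v.2 = u.2 + 1 ∨ u.2 = v.2 + 1)) ∨ (u.2 = v.2 ∧ (v.1 = u.1 + 1 ∨ u.1 = v.1 + 1))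

theorem grid_adj {Γ : Type} [AddCommGroup Γ] {μ g : Γ} (P : GPath (gridG μ g)) (i : Fin P.n) :
    gadj (P.v i.castSucc) (P.v i.succ) := by
  have h := P.incid i
  unfold gadj
  generalize P.v i.castSucc = u at *
  generalize P.v i.succ = v at *
  generalize P.e i = e at *
  obtain ⟨⟨r, c⟩, b⟩ := e
  obtain ⟨u1, u2⟩ := u
  obtain ⟨v1, v2⟩ := v
  cases b <;> simp [gridG, Prod.ext_iff] at h ⊢ <;> omega

/-- signed crossing of the step `u → v` with the upward ray at `p` -/
def crs (p u v : ℕ × ℕ) : ℤ :=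
  if u.1 < p.1 ∧ u.1 = v.1 then (if p.2 < v.2 then 1 else 0) - (if p.2 < u.2 then 1 else 0) else 0

def dd (p z : ℕ × ℕ) : ℤ := if z.1 < p.1 ∧ z.2 = p.2 then 1 else 0

theorem crs_vert {p q u v : ℕ × ℕ} (hc : p.2 = q.2) (hr : q.1 = p.1 + 1)
    (huv : gadj u v) (h1 : u ≠ p) (h2 : v ≠ p) : crs p u v = crs q u v := by
  obtain ⟨p1, p2⟩ := p
  obtain ⟨q1, q2⟩ := q
  obtain ⟨u1, u2⟩ := u
  obtain ⟨v1, v2⟩ := v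
  simp only [gadj, crs, ne_eq, Prod.mk.injEq] at *
  split_ifs <;> omega

theorem crs_horiz {p q u v : ℕ × ℕ} (hc : q.2 = p.2 + 1) (hr : p.1 = q.1)
    (huv : gadj u v) (h1 : u ≠ q) (h2 : v ≠ q) : crs p u v - crs q u v = dd q v - dd q u := by
  obtain ⟨p1, p2⟩ := p
  obtain ⟨q1, q2⟩ := q
  obtain ⟨u1, u2⟩ := u
  obtain ⟨v1, v2⟩ := v
  simp only [gadj, crs, dd, ne_eq, Prod.mk.injEq] at *
  split_ifs <;> omega

variable {Γ : Type} [AddCommGroup Γ] {μ g : Γ}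

def wnd (P : GPath (gridG μ g)) (p : ℕ × ℕ) : ℤ := ∑ i, crs p (P.v (Fin.castSucc i)) (P.v i.succ)

theorem tele (n : ℕ) (f : Fin (n+1) → ℤ) :
    ∑ i : Fin n, (f i.succ - f i.castSucc) = f (Fin.last n) - f 0 := by
  rw [Finset.sum_sub_distrib]
  have h1 := Fin.sum_univ_succ f
  have h2 := Fin.sum_univ_castSucc f
  linarith

theorem wnd_vert (P : GPath (gridG μ g)) {p q : ℕ × ℕ} (hc : p.2 = q.2) (hr : q.1 = p.1 + 1)
    (hp : p ∉ P.verts) : wnd P p = wnd P q := by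
  unfold wnd
  refine Finset.sum_congr rfl fun i _ => crs_vert hc hr (grid_adj P i) ?_ ?_
  · rintro rfl; exact hp ⟨_, rfl⟩
  · rintro rfl; exact hp ⟨_, rfl⟩

theorem wnd_horiz (P : GPath (gridG μ g)) {p q : ℕ × ℕ} (hc : q.2 = p.2 + 1) (hr : p.1 = q.1)
    (hq : q ∉ P.verts) (h0 : P.first.2 = 0) (h1 : P.last.2 ≠ q.2) : wnd P p = wnd P q := by
  have : wnd P p - wnd P q = dd q P.last - dd q P.first := by
    unfold wnd
    rw [← Finset.sum_sub_distrib]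
    refine (Finset.sum_congr rfl fun i _ => crs_horiz hc hr (grid_adj P i) ?_ ?_).trans
      (tele P.n (fun i => dd q (P.v i)))
    · rintro rfl; exact hq ⟨_, rfl⟩
    · rintro rfl; exact hq ⟨_, rfl⟩
  have e1 : dd q P.last = 0 := by unfold dd; rw [if_neg]; tauto
  have e2 : dd q P.first = 0 := by unfold dd; rw [if_neg]; omega
  linarith

theorem wnd_step (P : GPath (gridG μ g)) {p q : ℕ × ℕ} (hpq : gadj p q) (hp : p ∉ P.verts)
    (hq : q ∉ P.verts) (h0 : P.first.2 = 0) (h1 : P.last.2 ≠ q.2) (h2 : P.last.2 ≠ p.2) :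
    wnd P p = wnd P q := by
  rcases hpq with ⟨h, h' | h'⟩ | ⟨h, h' | h'⟩
  · exact wnd_horiz P h' h hq h0 h1
  · exact (wnd_horiz P h' h.symm hp h0 h2).symm
  · exact wnd_vert P h h' hp
  · exact (wnd_vert P h.symm h' hq).symm

/-- Normalised left-right path -/
structure LR (M : ℕ) (P : GPath (gridG μ g)) : Prop where
  pos : 0 < P.n
  fst : P.first.2 = 0
  lst : P.last.2 = M
  int : ∀ x, P.Internal x → x.2 ≠ 0 ∧ x.2 ≠ M

theorem LR.col_ne_zero {M : ℕ} (hM : 0 < M) {P : GPath (gridG μ g)} (h : LR M P) (i : Fin (P.n+1)) (hi : i ≠ 0) :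
    (P.v i).2 ≠ 0 := by
  by_cases hl : i = Fin.last P.n
  · have := h.lst
    subst hl
    unfold GPath.last at this
    omega
  · exact (h.int _ ⟨i, rfl, hi, hl⟩).1

theorem LR.col_ne_M {M : ℕ} (hM : 0 < M) {P : GPath (gridG μ g)} (h : LR M P) (i : Fin (P.n+1))
    (hi : i ≠ Fin.last P.n) : (P.v i).2 ≠ M := by
  by_cases hl : i = 0
  · have := h.fst
    subst hl
    unfold GPath.first at this
    omega
  · exact (h.int _ ⟨i, rfl, hl, hi⟩).2

theorem wnd_left {M : ℕ} (hM : 0 < M) {P : GPath (gridG μ g)} (h : LR M P) (r : ℕ) :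
    wnd P (r, 0) = if P.first.1 < r then 1 else 0 := by
  unfold wnd
  obtain ⟨n, hn⟩ : ∃ n, P.n = n + 1 := ⟨P.n - 1, by have := h.pos; omega⟩
  have hpos := h.pos
  rw [Finset.sum_eq_single (⟨0, hpos⟩ : Fin P.n)]
  · have h1 := h.col_ne_zero hM (Fin.succ ⟨0, hpos⟩) (Fin.succ_ne_zero _)
    have h2 := grid_adj P ⟨0, hpos⟩
    have h3 : P.v (Fin.castSucc ⟨0, hpos⟩) = P.first := rfl
    have h4 := h.fst
    rw [h3] at h2 ⊢
    simp only [crs, gadj] at *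
    split_ifs <;> omega
  · intro i _ hi
    have h1 := h.col_ne_zero hM i.succ (Fin.succ_ne_zero _)
    have h2 := h.col_ne_zero hM i.castSucc (by
      intro hh; apply hi; ext; simpa using congrArg Fin.val hh)
    simp only [crs]
    split_ifs <;> omega
  · simp

theorem wnd_top (P : GPath (gridG μ g)) (c : ℕ) : wnd P (0, c) = 0 := by
  unfold wnd; simp [crs]

theorem cross {M : ℕ} (hM : 0 < M) {P Q : GPath (gridG μ g)} (hP : LR M P) (hQ : LR M Q)
    (hd : Disjoint P.verts Q.verts) (i : Fin Q.n) (hi : (Q.v i.castSucc).1 = 0) :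
    Q.first.1 ≤ P.first.1 := by
  have hnot : ∀ j, Q.v j ∉ P.verts := fun j hj => Set.disjoint_left.1 hd hj ⟨j, rfl⟩
  have key : ∀ k : ℕ, ∀ hk : k < Q.n, wnd P (Q.v (Fin.castSucc ⟨k, hk⟩)) = wnd P Q.first := by
    intro k
    induction k with
    | zero => intro hk; rfl
    | succ k ih =>
      intro hk
      rw [← ih (by omega)]
      refine (wnd_step P (grid_adj Q ⟨k, by omega⟩) (hnot _) (hnot _) hP.fst ?_ ?_).symm
      · rw [hP.lst]
        exact (hQ.col_ne_M hM _ (by intro hh; have := congrArg Fin.val hh; simp at this; omega)).symm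
      · rw [hP.lst]
        exact (hQ.col_ne_M hM _ (by intro hh; have := congrArg Fin.val hh; simp at this; omega)).symm
  have h1 := key i i.2
  have e1 : Q.v (Fin.castSucc i) = (0, (Q.v i.castSucc).2) := by ext <;> simp [hi]
  have e2 : Q.first = (Q.first.1, 0) := by ext <;> simp [hQ.fst]
  have h1' : wnd P (Q.v (Fin.castSucc i)) = wnd P Q.first := h1
  rw [e1, wnd_top, e2, wnd_left hM hP] at h1'
  by_contra hcon
  rw [if_pos (not_le.1 hcon)] at h1'
  exact zero_ne_one h1'

theorem top_edge {M : ℕ} (hM : 0 < M) {P : GPath (gridG μ g)} (h : LR M P) (hl : P.glen ≠ μ) :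
    ∃ i : Fin P.n, (P.v i.castSucc).1 = 0 := by
  by_contra! hno
  apply hl
  unfold GPath.glen
  have hpos := h.pos
  rw [Finset.sum_eq_single (⟨0, hpos⟩ : Fin P.n)]
  · have h1 := h.col_ne_zero hM (Fin.succ ⟨0, hpos⟩) (Fin.succ_ne_zero _)
    have h2 := P.incid ⟨0, hpos⟩
    have h3 : P.v (Fin.castSucc ⟨0, hpos⟩) = P.first := rfl
    have h4 := h.fst
    rw [h3] at h2
    generalize P.first = u at *
    generalize P.v (Fin.succ ⟨0, hpos⟩) = v at *
    generalize P.e ⟨0, hpos⟩ = e at *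
    obtain ⟨⟨r, c⟩, b⟩ := e
    obtain ⟨u1, u2⟩ := u
    obtain ⟨v1, v2⟩ := v
    cases b <;> simp [gridG, Prod.ext_iff] at h2 h1 h4 ⊢
    · omega
    · intro h; omega
  · intro i _ hi
    have h1 := h.col_ne_zero hM i.succ (Fin.succ_ne_zero _)
    have h2 := h.col_ne_zero hM i.castSucc (by
      intro hh; apply hi; ext; simpa using congrArg Fin.val hh)
    have h3 := hno i
    have h5 := P.incid i
    generalize P.v i.castSucc = u at *
    generalize P.v i.succ = v at *
    generalize P.e i = e at *
    obtain ⟨⟨r, c⟩, b⟩ := e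
    obtain ⟨u1, u2⟩ := u
    obtain ⟨v1, v2⟩ := v
    cases b <;> simp [gridG, Prod.ext_iff] at h5 h1 h2 h3 ⊢
    rw [if_neg (by omega), if_neg (by omega)]
  · simp

theorem no_two {M : ℕ} (hM : 0 < M) {P Q : GPath (gridG μ g)} (hP : LR M P) (hQ : LR M Q)
    (hPl : P.glen ≠ μ) (hQl : Q.glen ≠ μ) (hd : Disjoint P.verts Q.verts) : False := by
  obtain ⟨i, hi⟩ := top_edge hM hP hPl
  obtain ⟨j, hj⟩ := top_edge hM hQ hQl
  have h1 := cross hM hP hQ hd j hj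
  have h2 := cross hM hQ hP hd.symm i hi
  have : P.first = Q.first := by
    ext
    · omega
    · rw [hP.fst, hQ.fst]
  have m1 : P.first ∈ P.verts := ⟨0, rfl⟩
  have m2 : P.first ∈ Q.verts := by rw [this]; exact ⟨0, rfl⟩
  exact Set.disjoint_left.1 hd m1 m2

/-- the detour path -/
def dvert (r c i : ℕ) : ℕ × ℕ :=
  if i ≤ c then (r, i) else if i ≤ c + r then (c + r - i, c)
  else if i ≤ c + 2 * r + 1 then (i - (c + r + 1), c + 1) else (r, i - 2 * r)

def dedge (r c i : ℕ) : (ℕ × ℕ) × Bool :=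
  if i < c then ((r, i), true) else if i < c + r then ((c + r - i - 1, c), false)
  else if i = c + r then ((0, c), true)
  else if i < c + 2 * r + 1 then ((i - (c + r + 1), c + 1), false) else ((r, i - 2 * r), true)

theorem dvert_inj {r c i j : ℕ} (h : dvert r c i = dvert r c j) : i = j := by
  unfold dvert at h
  split_ifs at h <;> simp only [Prod.mk.injEq] at h <;> omega

theorem dedge_incid (μ g : Γ) (r c i : ℕ) :
    (gridG μ g).ends (dedge r c i) = s(dvert r c i, dvert r c (i+1)) := by
  have hends : ∀ e : (ℕ × ℕ) × Bool, (gridG μ g).ends e =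
    if e.2 then s(e.1, (e.1.1, e.1.2 + 1)) else s(e.1, (e.1.1 + 1, e.1.2)) := fun _ => rfl
  rw [hends]
  rcases lt_or_ge i c with h | h
  · have e1 : dvert r c i = (r, i) := by
      unfold dvert; split_ifs <;> ext <;> dsimp only <;> omega
    have e2 : dvert r c (i+1) = (r, i + 1) := by
      unfold dvert; split_ifs <;> ext <;> dsimp only <;> omega
    have e0 : dedge r c i = ((r, i), true) := by
      unfold dedge; split_ifs <;> first | rfl | omega
    rw [e0, e1, e2]; rfl
  rcases lt_or_ge i (c + r) with h1 | h1
  · have e1 : dvert r c i = (c + r - i - 1 + 1, c) := by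
      unfold dvert; split_ifs <;> ext <;> dsimp only <;> omega
    have e2 : dvert r c (i+1) = (c + r - i - 1, c) := by
      unfold dvert; split_ifs <;> ext <;> dsimp only <;> omega
    have e0 : dedge r c i = ((c + r - i - 1, c), false) := by
      unfold dedge; split_ifs <;> first | rfl | omega
    rw [e0, e1, e2]; exact Sym2.eq_swap
  rcases eq_or_ne i (c + r) with h2 | h2
  · have e1 : dvert r c i = (0, c) := by
      unfold dvert; split_ifs <;> ext <;> dsimp only <;> omega
    have e2 : dvert r c (i+1) = (0, c + 1) := by
      unfold dvert; split_ifs <;> ext <;> dsimp only <;> omega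
    have e0 : dedge r c i = ((0, c), true) := by
      unfold dedge; split_ifs <;> first | rfl | omega
    rw [e0, e1, e2]; rfl
  rcases lt_or_ge i (c + 2 * r + 1) with h3 | h3
  · have e1 : dvert r c i = (i - (c + r + 1), c + 1) := by
      unfold dvert; split_ifs <;> ext <;> dsimp only <;> omega
    have e2 : dvert r c (i+1) = (i - (c + r + 1) + 1, c + 1) := by
      unfold dvert; split_ifs <;> ext <;> dsimp only <;> omega
    have e0 : dedge r c i = ((i - (c + r + 1), c + 1), false) := by
      unfold dedge; split_ifs <;> first | rfl | omega
    rw [e0, e1, e2]; rfl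
  · have e1 : dvert r c i = (r, i - 2 * r) := by
      unfold dvert; split_ifs <;> ext <;> dsimp only <;> omega
    have e2 : dvert r c (i+1) = (r, i - 2 * r + 1) := by
      unfold dvert; split_ifs <;> ext <;> dsimp only <;> omega
    have e0 : dedge r c i = ((r, i - 2 * r), true) := by
      unfold dedge; split_ifs <;> first | rfl | omega
    rw [e0, e1, e2]; rfl

def dpath (μ g : Γ) (r c M : ℕ) : GPath (gridG μ g) where
  n := M + 2 * r
  v := fun i => dvert r c i
  e := fun i => dedge r c i
  inj := fun i j h => Fin.ext (dvert_inj h)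
  incid := fun i => by simpa using dedge_incid μ g r c i

theorem dpath_glen (μ g : Γ) {r c M : ℕ} (hr : 0 < r) (hc : c % 2 = 1) (hM : c + 1 < M) :
    (dpath μ g r c M).glen = μ + g := by
  unfold GPath.glen dpath
  simp only
  have : ∀ i : ℕ, (gridG μ g).lab (dedge r c i) = (if i = 0 then μ else 0) + (if i = c + r then g else 0) := by
    intro i
    unfold gridG dedge
    simp only
    split_ifs <;> simp at * <;> omega
  simp only [this]
  rw [Finset.sum_add_distrib, Fin.sum_univ_eq_sum_range (fun i => if i = 0 then μ else 0),
    Fin.sum_univ_eq_sum_range (fun i => if i = c + r then g else 0), Finset.sum_ite_eq',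
    Finset.sum_ite_eq', if_pos (by simp; omega), if_pos (by simp; omega)]

theorem dvert_mem {r c i : ℕ} : (dvert r c i).1 = r ∨ (dvert r c i).2 = c ∨ (dvert r c i).2 = c + 1 := by
  unfold dvert
  split_ifs <;> simp

theorem dpath_AB (μ g : Γ) {r c M : ℕ} (hr : 0 < r) (hc : c % 2 = 1) (hM : c + 1 < M) :
    IsABPath {p | p.2 = 0} {p | p.2 = M} (dpath μ g r c M) := by
  refine ⟨by simp [dpath]; omega, Or.inl ⟨by simp [dpath, GPath.first, dvert], ?_⟩, ?_⟩
  · simp only [dpath, GPath.last, dvert, Set.mem_ofPred_eq, Fin.val_last]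
    split_ifs <;> simp <;> omega
  · rintro x ⟨i, rfl, h1, h2⟩
    have h1' : (i : ℕ) ≠ 0 := fun h => h1 (Fin.ext h)
    have h2' : (i : ℕ) ≠ M + 2 * r := fun h => h2 (Fin.ext h)
    have h3 : (i : ℕ) < M + 2 * r + 1 := i.2
    simp only [dpath, dvert, Set.mem_union, Set.mem_ofPred_eq]
    split_ifs <;> simp <;> omega

theorem part1 (Λ : Set Γ) (h1 : Λ.Nonempty) (h2 : Λ ≠ Set.univ) :
      ¬ ∃ f : ℕ → ℕ, ∀ k : ℕ, 0 < k → ∀ (V : Type) (A B : Set V) (G : LabGraph V Γ),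
        (∃ Ps : Fin k → GPath G,
          (∀ i, IsABPath A B (Ps i) ∧ (Ps i).glen ∈ Λ) ∧
          ∀ i j, i ≠ j → Disjoint (Ps i).verts (Ps j).verts) ∨
        (∃ X : Set V, X.Finite ∧ X.ncard ≤ f k ∧
          ∀ P : GPath G, IsABPath A B P → P.glen ∈ Λ → (P.verts ∩ X).Nonempty) := by
  rintro ⟨f, hf⟩
  obtain ⟨l, hl⟩ := h1
  obtain ⟨μ, hμ⟩ := (Set.ne_univ_iff_exists_notMem _).1 h2
  set m := f 2
  set M := 2 * m + 4 with hMdef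
  have hM : 0 < M := by omega
  rcases hf 2 (by norm_num) (ℕ × ℕ) {p | p.2 = 0} {p | p.2 = M} (gridG μ (l - μ)) with
    ⟨Ps, hPs, hd⟩ | ⟨X, hX, hXc, hhit⟩
  · have norm : ∀ i, ∃ Q : GPath (gridG μ (l - μ)), Q.verts = (Ps i).verts ∧ Q.glen ≠ μ ∧ LR M Q := by
      intro i
      obtain ⟨Q, a1, a2, a3, a4, a5, a6⟩ := exists_normal (Ps i) (hPs i).1
      refine ⟨Q, a1, ?_, a3, a4, a5, ?_⟩
      · rintro h
        apply hμ
        rw [← h, a2]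
        exact (hPs i).2
      · intro x hx
        have := a6 x hx
        simpa [not_or] using this
    obtain ⟨Q0, b1, b2, b3⟩ := norm 0
    obtain ⟨Q1, c1, c2, c3⟩ := norm 1
    exact no_two hM b3 c3 b2 c2 (by rw [b1, c1]; exact hd 0 1 (by simp))
  · obtain ⟨r, hr0, hr⟩ : ∃ r, 0 < r ∧ ∀ x ∈ X, x.1 ≠ r := by
      obtain ⟨b, hb⟩ := (hX.image Prod.fst).bddAbove
      refine ⟨b + 1, by omega, fun x hx h => ?_⟩
      have := hb ⟨x, hx, rfl⟩
      omega
    obtain ⟨j, hj, hjX⟩ : ∃ j, j < m + 1 ∧ ∀ x ∈ X, (x.2 - 1) / 2 ≠ j := by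
      by_contra! hcon
      have hsub : (Finset.range (m+1) : Set ℕ) ⊆ (fun x : ℕ × ℕ => (x.2 - 1) / 2) '' X := by
        intro j hj
        obtain ⟨x, hx, h⟩ := hcon j (by simpa using hj)
        exact ⟨x, hx, h⟩
      have := Set.ncard_le_ncard hsub (hX.image _)
      have h' := Set.ncard_image_le (f := (fun x : ℕ × ℕ => (x.2 - 1) / 2)) hX
      rw [Set.ncard_coe_finset] at this
      simp at this
      omega
    obtain ⟨x, ⟨i, hi⟩, hxX⟩ := hhit (dpath μ (l - μ) r (2 * j + 1) M)
      (dpath_AB _ _ hr0 (by omega) (by omega))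
      (by rw [dpath_glen _ _ hr0 (by omega) (by omega)]; simpa using hl)
    have hm : x.1 = r ∨ x.2 = 2 * j + 1 ∨ x.2 = 2 * j + 1 + 1 := by rw [← hi]; exact dvert_mem
    have q1 := hr x hxX
    have q2 := hjX x hxX
    omega
end Part1
section Part2
variable {V : Type}

theorem first_hit (p : V → Prop) : ∀ l : List V, (∃ v ∈ l, p v) →
    ∃ m y t, l = m ++ y :: t ∧ p y ∧ ∀ v ∈ m, ¬ p v
  | [], h => by simp at h
  | a :: l, h => by
    by_cases ha : p a
    · exact ⟨[], a, l, rfl, ha, by simp⟩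
    · obtain ⟨v, hv, hp⟩ := h
      have hv' : v ∈ l := by
        rcases List.mem_cons.1 hv with rfl | h
        · exact absurd hp ha
        · exact h
      obtain ⟨m, y, t, h1, h2, h3⟩ := first_hit p l ⟨v, hv', hp⟩
      refine ⟨a :: m, y, t, by simp [h1], h2, ?_⟩
      intro w hw
      rcases List.mem_cons.1 hw with rfl | h
      · exact ha
      · exact h3 w h

theorem last_hit (p : V → Prop) (l : List V) (h : ∃ v ∈ l, p v) :
    ∃ m y t, l = m ++ y :: t ∧ p y ∧ ∀ v ∈ t, ¬ p v := by
  obtain ⟨m, y, t, h1, h2, h3⟩ := first_hit p l.reverse (by simpa using h)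
  refine ⟨t.reverse, y, m.reverse, ?_, h2, by simpa using h3⟩
  have := congrArg List.reverse h1
  simpa using this

structure IsP (R : V → V → Prop) (A B : Set V) (l : List V) (y : V) : Prop where
  chain : l.IsChain R
  nodup : l.Nodup
  head : ∃ a ∈ A, l.head? = some a
  last : l.getLast? = some y
  yB : y ∈ B
  only : ∀ v ∈ l, v ∈ B → v = y

structure Linkage (R : V → V → Prop) (A B : Set V) (Y : Finset V) (P : V → List V) : Prop where
  path : ∀ y ∈ Y, IsP R A B (P y) y
  disj : ∀ y ∈ Y, ∀ z ∈ Y, y ≠ z → List.Disjoint (P y) (P z)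

structure Tail (R : V → V → Prop) (B B' : Set V) (z : V) (t : List V) (e : V) : Prop where
  chain : (z :: t).IsChain R
  nodup : (z :: t).Nodup
  sub : ∀ v ∈ t, v ∈ B'
  last : (z :: t).getLast? = some e
  eB : e ∈ B
  only : ∀ v ∈ z :: t, v ∈ B → v = e

variable {R : V → V → Prop} {A B B' : Set V}

theorem prefix_hit {l : List V} (hc : l.IsChain R) (hn : l.Nodup) (hh : ∃ a ∈ A, l.head? = some a)
    (hB : ∃ v ∈ l, v ∈ B) : ∃ l' y, IsP R A B l' y ∧ ∀ v ∈ l', v ∈ l := by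
  obtain ⟨m, y, t, rfl, hy, hm⟩ := first_hit (· ∈ B) l hB
  have e : m ++ y :: t = (m ++ [y]) ++ t := by simp
  rw [e] at hc hn
  refine ⟨m ++ [y], y, ⟨hc.left_of_append, (List.nodup_append.1 hn).1, ?_, by simp, hy, ?_⟩, ?_⟩
  · obtain ⟨a, ha, h⟩ := hh
    refine ⟨a, ha, ?_⟩
    rw [← h]
    cases m <;> simp
  · intro v hv hvB
    rcases List.mem_append.1 hv with h | h
    · exact absurd hvB (hm v h)
    · simpa using h
  · intro v hv
    simp at hv ⊢
    tauto

theorem Tail.suffix {x y e : V} {s t : List V} (h : Tail R B B' x (s ++ y :: t) e) :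
    Tail R B B' y t e := by
  have e1 : x :: (s ++ y :: t) = (x :: s) ++ (y :: t) := by simp
  obtain ⟨h1, h2, h3, h4, h5, h6⟩ := h
  rw [e1] at h1 h2 h4 h6
  refine ⟨h1.right_of_append, (List.nodup_append.1 h2).2.1, fun v hv => h3 v (by simp [hv]), ?_, h5,
    fun v hv => h6 v (List.mem_append_right _ hv)⟩
  rw [← h4, List.getLast?_append]
  simp [List.getLast?_cons]

theorem glue {Z : Finset V} {Q : V → List V} [DecidableEq V] (hQ : Linkage R A B' Z Q) (hB : B ⊆ B')
    (t : V → List V) (e : V → V) (ht : ∀ z ∈ Z, Tail R B B' z (t z) (e z))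
    (hd : ∀ z ∈ Z, ∀ w ∈ Z, z ≠ w → List.Disjoint (z :: t z) (w :: t w)) :
    Set.InjOn e Z ∧ ∃ P, Linkage R A B (Z.image e) P := by
  have hmem : ∀ z ∈ Z, e z ∈ z :: t z := fun z hz => List.mem_of_getLast? (ht z hz).last
  have hinj : Set.InjOn e Z := by
    intro z hz w hw h
    by_contra hne
    exact hd z hz w hw hne (hmem z hz) (h ▸ hmem w hw)
  refine ⟨hinj, ?_⟩
  classical
  have hinv : ∀ y ∈ Z.image e, ∃ z, z ∈ Z ∧ e z = y := by
    intro y hy; simpa using hy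
  choose! i hi1 hi2 using hinv
  refine ⟨fun y => Q (i y) ++ t (i y), ?_, ?_⟩
  · intro y hy
    have hz := hi1 y hy
    have hzy := hi2 y hy
    generalize i y = z at *
    have q := hQ.path z hz
    have T := ht z hz
    have hzn := List.nodup_cons.1 T.nodup
    refine ⟨?_, ?_, ?_, ?_, hzy ▸ T.eB, ?_⟩
    · refine List.isChain_append.2 ⟨q.chain, T.chain.tail, ?_⟩
      intro u hu v hv
      rw [q.last] at hu
      obtain rfl : z = u := by simpa using hu
      exact T.chain.rel_head? hv
    · refine List.nodup_append.2 ⟨q.nodup, hzn.2, ?_⟩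
      rintro u hu v hv rfl
      have := q.only u hu (T.sub u hv)
      subst this
      exact hzn.1 hv
    · obtain ⟨a, ha, h⟩ := q.head
      exact ⟨a, ha, by simp [List.head?_append, h]⟩
    · have h1 := T.last
      rw [List.getLast?_append, q.last]
      rw [List.getLast?_cons] at h1
      rw [← hzy, ← h1]
      cases h : (t z).getLast? <;> simp
    · intro v hv hvB
      rw [← hzy]
      rcases List.mem_append.1 hv with h | h
      · have := q.only v h (hB hvB)
        exact T.only v (by simp [this]) hvB
      · exact T.only v (by simp [h]) hvB
  · intro y hy y' hy' hne
    have hz := hi1 y hy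
    have hzy := hi2 y hy
    have hw := hi1 y' hy'
    have hwy := hi2 y' hy'
    have hzw : i y ≠ i y' := by
      intro h; apply hne; rw [← hzy, ← hwy, h]
    generalize i y = z at *
    generalize i y' = w at *
    intro v h1 h2
    have D := hd z hz w hw hzw
    rcases List.mem_append.1 h1 with h1 | h1 <;> rcases List.mem_append.1 h2 with h2 | h2
    · exact hQ.disj z hz w hw hzw h1 h2
    · have := (hQ.path z hz).only v h1 ((ht w hw).sub v h2)
      exact D (a := v) (by simp [this]) (by simp [h2])
    · have := (hQ.path w hw).only v h2 ((ht z hz).sub v h1)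
      exact D (a := v) (by simp [h1]) (by simp [this])
    · exact D (a := v) (by simp [h1]) (by simp [h2])

theorem augment [DecidableEq V] : ∀ (N : ℕ) (B : Set V) (Y : Finset V) (P : V → List V),
    Linkage R A B Y P → ∑ y ∈ Y, (P y).length = N →
    (∀ X : Finset V, X.card ≤ Y.card → ∃ l y, IsP R A B l y ∧ ∀ v ∈ l, v ∉ X) →
    ∃ Y' P', Y ⊆ Y' ∧ Y'.card = Y.card + 1 ∧ Linkage R A B Y' P' := by
  intro N
  induction N using Nat.strong_induction_on with
  | _ N ih =>
  intro B Y P hP hN hsep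
  obtain ⟨l, c, hl, hlY⟩ := hsep Y le_rfl
  have hcl : c ∈ l := List.mem_of_getLast? hl.last
  have hcY : c ∉ Y := hlY c hcl
  by_cases hmeet : ∃ v ∈ l, ∃ y ∈ Y, v ∈ P y
  swap
  · push Not at hmeet
    refine ⟨insert c Y, Function.update P c l, Finset.subset_insert _ _, Finset.card_insert_of_notMem hcY, ?_, ?_⟩
    · intro y hyI
      rcases Finset.mem_insert.1 hyI with rfl | hy
      · simpa using hl
      · rw [Function.update_of_ne (by rintro rfl; exact hcY hy)]
        exact hP.path y hy
    · intro y hyI z hzI hne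
      rcases Finset.mem_insert.1 hyI with rfl | hy <;> rcases Finset.mem_insert.1 hzI with rfl | hz
      · exact absurd rfl hne
      · rw [Function.update_self, Function.update_of_ne hne.symm]
        intro v h1 h2
        exact hmeet v h1 z hz h2
      · rw [Function.update_self, Function.update_of_ne hne]
        intro v h1 h2
        exact hmeet v h2 y hy h1
      · rw [Function.update_of_ne (by rintro rfl; exact hcY hy), Function.update_of_ne (by rintro rfl; exact hcY hz)]
        exact hP.disj y hy z hz hne
  obtain ⟨r1, x, r2, hlr, ⟨b, hb, hxb⟩, hr2⟩ := last_hit (fun v => ∃ y ∈ Y, v ∈ P y) l hmeet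
  have hxl : x ∈ l := by rw [hlr]; simp
  have hxY : x ∉ Y := hlY x hxl
  have hpb := hP.path b hb
  have hxB : x ∉ B := by
    intro h
    have := hpb.only x hxb h
    exact hxY (this ▸ hb)
  obtain ⟨p1, p2, hpp⟩ := List.append_of_mem hxb
  set B' : Set V := B ∪ {v | v = x ∨ v ∈ p2 ∨ v ∈ r2} with hB'
  have hBB' : B ⊆ B' := Set.subset_union_left
  -- tails
  have Tp : Tail R B B' x p2 b := by
    obtain ⟨h1, h2, h3, h4, h5, h6⟩ := hpb
    rw [hpp] at h1 h2 h4 h6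
    refine ⟨h1.right_of_append, (List.nodup_append.1 h2).2.1, fun v hv => Or.inr (Or.inr (Or.inl hv)), ?_, h5,
      fun v hv => h6 v (List.mem_append_right _ hv)⟩
    rw [← h4, List.getLast?_append]; simp [List.getLast?_cons]
  have Tr : Tail R B B' x r2 c := by
    obtain ⟨h1, h2, h3, h4, h5, h6⟩ := hl
    rw [hlr] at h1 h2 h4 h6
    refine ⟨h1.right_of_append, (List.nodup_append.1 h2).2.1, fun v hv => Or.inr (Or.inr (Or.inr hv)), ?_, h5,
      fun v hv => h6 v (List.mem_append_right _ hv)⟩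
    rw [← h4, List.getLast?_append]; simp [List.getLast?_cons]
  have hbp2 : b ∈ p2 := by
    have := List.mem_of_getLast? Tp.last
    rcases List.mem_cons.1 this with h | h
    · exact absurd (h ▸ hpb.yB) hxB
    · exact h
  have hnp := hpb.nodup
  rw [hpp] at hnp
  have hp1x : ∀ v ∈ p1, v ∉ x :: p2 := fun v h1 h2 => (List.nodup_append.1 hnp).2.2 v h1 v h2 rfl
  have hp1P : ∀ v ∈ p1, v ∈ P b := fun v h => by rw [hpp]; simp [h]
  have hp2P : ∀ v ∈ p2, v ∈ P b := fun v h => by rw [hpp]; simp [h]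
  have hPr2 : ∀ y ∈ Y, ∀ v ∈ P y, v ∉ r2 := fun y hy v hv h => hr2 v h ⟨y, hy, hv⟩
  have hYmem : ∀ y ∈ Y, y ∈ P y := fun y hy => List.mem_of_getLast? (hP.path y hy).last
  set Y0 := Y.erase b with hY0
  have hxY0 : x ∉ Y0 := fun h => hxY (Finset.mem_of_mem_erase h)
  set P1 := Function.update P x (p1 ++ [x]) with hP1
  have hP1x : P1 x = p1 ++ [x] := Function.update_self ..
  have hP1z : ∀ z ∈ Y0, P1 z = P z := fun z hz => Function.update_of_ne (by rintro rfl; exact hxY0 hz) ..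
  have hdisj0 : ∀ z ∈ Y0, ∀ v ∈ P z, v ∉ P b := fun z hz v h1 h2 =>
    hP.disj z (Finset.mem_of_mem_erase hz) b hb (Finset.ne_of_mem_erase hz) h1 h2
  have hL1 : Linkage R A B' (insert x Y0) P1 := by
    refine ⟨?_, ?_⟩
    · intro z hzI
      rcases Finset.mem_insert.1 hzI with rfl | hz
      · rw [hP1x]
        have e : p1 ++ z :: p2 = (p1 ++ [z]) ++ p2 := by simp
        have hch := hpb.chain
        rw [hpp, e] at hch
        rw [e] at hnp
        refine ⟨hch.left_of_append, (List.nodup_append.1 hnp).1, ?_, by simp, Or.inr (Or.inl rfl), ?_⟩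
        · obtain ⟨a, ha, h⟩ := hpb.head
          refine ⟨a, ha, ?_⟩
          rw [← h, hpp]
          cases p1 <;> simp
        · intro v hv hvB
          rcases List.mem_append.1 hv with h | h
          · exfalso
            rcases hvB with hvB | rfl | hv2 | hv2
            · have := hpb.only v (hp1P v h) hvB
              subst this
              exact hp1x v h (by simp [hbp2])
            · exact hp1x v h (by simp)
            · exact hp1x v h (by simp [hv2])
            · exact hPr2 b hb v (hp1P v h) hv2
          · simpa using h
      · rw [hP1z z hz]
        obtain ⟨h1, h2, h3, h4, h5, h6⟩ := hP.path z (Finset.mem_of_mem_erase hz)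
        refine ⟨h1, h2, h3, h4, Or.inl h5, ?_⟩
        intro v hv hvB
        rcases hvB with hvB | rfl | hv2 | hv2
        · exact h6 v hv hvB
        · exact absurd hxb (hdisj0 z hz v hv)
        · exact absurd (hp2P v hv2) (hdisj0 z hz v hv)
        · exact absurd hv2 (hPr2 z (Finset.mem_of_mem_erase hz) v hv)
    · have aux : ∀ z ∈ Y0, List.Disjoint (P1 x) (P1 z) := by
        intro z hz
        rw [hP1x, hP1z z hz]
        intro v h1 h2
        apply hdisj0 z hz v h2
        rcases List.mem_append.1 h1 with h | h
        · exact hp1P v h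
        · have : v = x := by simpa using h
          rw [this]; exact hxb
      intro y hyI z hzI hne
      rcases Finset.mem_insert.1 hyI with rfl | hy <;> rcases Finset.mem_insert.1 hzI with rfl | hz
      · exact absurd rfl hne
      · exact aux z hz
      · exact (aux y hy).symm
      · rw [hP1z y hy, hP1z z hz]
        exact hP.disj y (Finset.mem_of_mem_erase hy) z (Finset.mem_of_mem_erase hz) hne
  have hcard1 : (insert x Y0).card = Y.card := by
    rw [Finset.card_insert_of_notMem hxY0, Finset.card_erase_add_one hb]
  have hsum : ∑ y ∈ insert x Y0, (P1 y).length < N := by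
    rw [Finset.sum_insert hxY0, hP1x, Finset.sum_congr rfl (fun z hz => by rw [hP1z z hz]), ← hN,
      ← Finset.add_sum_erase Y _ hb, hpp]
    have : 0 < p2.length := List.length_pos_of_mem hbp2
    simp only [List.length_append, List.length_cons, List.length_nil]
    rw [← hY0]
    omega
  obtain ⟨Y2, Q, hsub, hcard, hQ⟩ := ih _ hsum B' (insert x Y0) P1 hL1 rfl (by
    intro X hX
    rw [hcard1] at hX
    obtain ⟨l', y, h1, h2⟩ := hsep X hX
    obtain ⟨l'', y', h3, h4⟩ := prefix_hit (B := B') h1.chain h1.nodup h1.head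
      ⟨y, List.mem_of_getLast? h1.last, hBB' h1.yB⟩
    exact ⟨l'', y', h3, fun v hv => h2 v (h4 v hv)⟩)
  obtain ⟨y, hyY, hY2⟩ : ∃ y, y ∉ insert x Y0 ∧ insert y (insert x Y0) = Y2 := by
    have hdc : (Y2 \ insert x Y0).card = 1 := by
      rw [Finset.card_sdiff_of_subset hsub]; omega
    obtain ⟨y, hy⟩ := Finset.card_eq_one.1 hdc
    have hy' : y ∈ Y2 \ insert x Y0 := by rw [hy]; simp
    refine ⟨y, (Finset.mem_sdiff.1 hy').2, ?_⟩
    refine Finset.eq_of_subset_of_card_le ?_ ?_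
    · exact Finset.insert_subset (Finset.mem_sdiff.1 hy').1 hsub
    · rw [Finset.card_insert_of_notMem (Finset.mem_sdiff.1 hy').2]; omega
  have hyx : y ≠ x := by rintro rfl; exact hyY (by simp)
  have hyY0 : y ∉ Y0 := fun h => hyY (by simp [h])
  have hyB' : y ∈ B' := (hQ.path y (by rw [← hY2]; simp)).yB
  have hY0p2 : ∀ z ∈ Y0, z ∉ p2 := fun z hz h =>
    hdisj0 z hz z (hYmem z (Finset.mem_of_mem_erase hz)) (hp2P z h)
  have hY0r2 : ∀ z ∈ Y0, z ∉ r2 := fun z hz h =>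
    hPr2 z (Finset.mem_of_mem_erase hz) z (hYmem z (Finset.mem_of_mem_erase hz)) h
  have hp2r2 : ∀ v ∈ p2, v ∉ r2 := fun v hv => hPr2 b hb v (hp2P v hv)
  have hxp2 := (List.nodup_cons.1 Tp.nodup).1
  have hxr2 := (List.nodup_cons.1 Tr.nodup).1
  have key : ∃ tx ty ex ey, Tail R B B' x tx ex ∧ Tail R B B' y ty ey ∧
      List.Disjoint (x :: tx) (y :: ty) ∧ (∀ z ∈ Y0, z ∉ tx) ∧ (∀ z ∈ Y0, z ∉ ty) ∧ (ex = b ∨ ey = b) := by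
    by_cases hy2 : y ∈ p2
    · obtain ⟨s, t, hst⟩ := List.append_of_mem hy2
      have htp : ∀ v ∈ y :: t, v ∈ p2 := fun v hv => by rw [hst]; exact List.mem_append_right _ hv
      refine ⟨r2, t, c, b, Tr, Tail.suffix (hst ▸ Tp), ?_, hY0r2, ?_, Or.inr rfl⟩
      · intro v h1 h2
        rcases List.mem_cons.1 h1 with rfl | h1
        · exact hxp2 (htp v h2)
        · exact hp2r2 v (htp v h2) h1
      · exact fun z hz h => hY0p2 z hz (htp z (by simp [h]))
    · by_cases hy3 : y ∈ r2
      · obtain ⟨s, t, hst⟩ := List.append_of_mem hy3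
        have htp : ∀ v ∈ y :: t, v ∈ r2 := fun v hv => by rw [hst]; exact List.mem_append_right _ hv
        refine ⟨p2, t, b, c, Tp, Tail.suffix (hst ▸ Tr), ?_, hY0p2, ?_, Or.inl rfl⟩
        · intro v h1 h2
          rcases List.mem_cons.1 h1 with rfl | h1
          · exact hxr2 (htp v h2)
          · exact hp2r2 v h1 (htp v h2)
        · exact fun z hz h => hY0r2 z hz (htp z (by simp [h]))
      · have hyB : y ∈ B := by
          rcases hyB' with h | h | h | h
          · exact h
          · exact absurd h hyx
          · exact absurd h hy2
          · exact absurd h hy3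
        refine ⟨p2, [], b, y, Tp, ⟨by simp, by simp, by simp, by simp, hyB, by simp⟩, ?_, hY0p2, by simp, Or.inl rfl⟩
        intro v h1 h2
        have : v = y := by simpa using h2
        subst this
        rcases List.mem_cons.1 h1 with rfl | h1
        · exact hyx rfl
        · exact hy2 h1
  obtain ⟨tx, ty, ex, ey, hTx, hTy, hxy, hzx, hzy, hbe⟩ := key
  set t : V → List V := fun z => if z = x then tx else if z = y then ty else [] with ht
  set e : V → V := fun z => if z = x then ex else if z = y then ey else z with he
  have htx : t x = tx := by simp [ht]
  have hty : t y = ty := by simp [ht, hyx]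
  have hex : e x = ex := by simp [he]
  have hey : e y = ey := by simp [he, hyx]
  have htz : ∀ z ∈ Y0, t z = [] := fun z hz => by
    have h1 : z ≠ x := by rintro rfl; exact hxY0 hz
    have h2 : z ≠ y := by rintro rfl; exact hyY0 hz
    simp [ht, h1, h2]
  have hez : ∀ z ∈ Y0, e z = z := fun z hz => by
    have h1 : z ≠ x := by rintro rfl; exact hxY0 hz
    have h2 : z ≠ y := by rintro rfl; exact hyY0 hz
    simp [he, h1, h2]
  have hmemY2 : ∀ z ∈ Y2, z = y ∨ z = x ∨ z ∈ Y0 := by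
    intro z hz; rw [← hY2] at hz; simpa using hz
  have dxz : ∀ z ∈ Y0, List.Disjoint (x :: tx) [z] := by
    intro z hz v h1 h2
    have : v = z := by simpa using h2
    subst this
    rcases List.mem_cons.1 h1 with rfl | h1
    · exact hxY0 hz
    · exact hzx v hz h1
  have dyz : ∀ z ∈ Y0, List.Disjoint (y :: ty) [z] := by
    intro z hz v h1 h2
    have : v = z := by simpa using h2
    subst this
    rcases List.mem_cons.1 h1 with rfl | h1
    · exact hyY0 hz
    · exact hzy v hz h1
  obtain ⟨hinj, P', hP'⟩ := glue hQ hBB' t e (by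
      intro z hz
      rcases hmemY2 z hz with rfl | rfl | hz
      · rw [hty, hey]; exact hTy
      · rw [htx, hex]; exact hTx
      · rw [htz z hz, hez z hz]
        exact ⟨by simp, by simp, by simp, by simp, (hP.path z (Finset.mem_of_mem_erase hz)).yB, by simp⟩)
    (by
      intro z hz w hw hne
      rcases hmemY2 z hz with rfl | rfl | hz <;> rcases hmemY2 w hw with rfl | rfl | hw
      · exact absurd rfl hne
      · rw [htx, hty]; exact hxy.symm
      · rw [hty, htz w hw]; exact dyz w hw
      · rw [htx, hty]; exact hxy
      · exact absurd rfl hne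
      · rw [htx, htz w hw]; exact dxz w hw
      · rw [hty, htz z hz]; exact (dyz z hz).symm
      · rw [htx, htz z hz]; exact (dxz z hz).symm
      · rw [htz z hz, htz w hw]
        simpa using hne.symm)
  refine ⟨Y2.image e, P', ?_, ?_, hP'⟩
  · intro z hz
    rw [Finset.mem_image]
    by_cases hzb : z = b
    · rcases hbe with h | h
      · exact ⟨x, by rw [← hY2]; simp, by rw [hex, h, hzb]⟩
      · exact ⟨y, by rw [← hY2]; simp, by rw [hey, h, hzb]⟩
    · have hz0 : z ∈ Y0 := Finset.mem_erase.2 ⟨hzb, hz⟩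
      exact ⟨z, by rw [← hY2]; simp [hz0], hez z hz0⟩
  · rw [Finset.card_image_of_injOn hinj, hcard, hcard1]

theorem menger (R : V → V → Prop) (A B : Set V) (k : ℕ) :
    (∃ Y P, Y.card = k ∧ Linkage R A B Y P) ∨
    (∃ X : Finset V, X.card < k ∧ ∀ l y, IsP R A B l y → ∃ v ∈ l, v ∈ X) := by
  classical
  induction k with
  | zero => exact Or.inl ⟨∅, fun _ => [], rfl, by simp, by simp⟩
  | succ k ih =>
    rcases ih with ⟨Y, P, hY, hP⟩ | ⟨X, hX, h⟩
    · by_cases hs : ∀ X : Finset V, X.card ≤ Y.card → ∃ l y, IsP R A B l y ∧ ∀ v ∈ l, v ∉ X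
      · obtain ⟨Y', P', _, h2, h3⟩ := augment _ B Y P hP rfl hs
        exact Or.inl ⟨Y', P', by omega, h3⟩
      · push Not at hs
        obtain ⟨X, hX, h⟩ := hs
        exact Or.inr ⟨X, by omega, h⟩
    · exact Or.inr ⟨X, by omega, h⟩
end Part2
section Part3
variable {V : Type}

structure IsL (R : V → V → Prop) (S T : Set V) (l : List V) (a b : V) : Prop where
  chain : l.IsChain R
  nodup : l.Nodup
  aS : a ∈ S
  bT : b ∈ T
  ne : a ≠ b
  head : l.head? = some a
  last : l.getLast? = some b
  only : ∀ v ∈ l, v ∈ S ∨ v ∈ T → v = a ∨ v = b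

theorem mengerL (R : V → V → Prop) (S T : Set V) (hST : ∀ v ∈ S, v ∉ T) (k : ℕ) :
    (∃ Ps : Fin k → List V, (∀ i, ∃ a b, IsL R S T (Ps i) a b) ∧
      ∀ i j, i ≠ j → List.Disjoint (Ps i) (Ps j)) ∨
    (∃ X : Finset V, X.card < k ∧ ∀ l : List V, l.IsChain R → l.Nodup → (∃ a ∈ S, l.head? = some a) →
      (∃ v ∈ l, v ∈ T) → ∃ v ∈ l, v ∈ X) := by
  rcases menger R S T k with ⟨Y, P, hY, hP⟩ | ⟨X, hX, h⟩
  · left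
    have hcut : ∀ y ∈ Y, ∃ l a, IsL R S T l a y ∧ ∀ v ∈ l, v ∈ P y := by
      intro y hy
      have p := hP.path y hy
      obtain ⟨a0, ha0, hh⟩ := p.head
      obtain ⟨m, a, t, hl, haS, ht⟩ := last_hit (· ∈ S) (P y) ⟨a0, List.mem_of_head? hh, ha0⟩
      obtain ⟨h1, h2, h3, h4, h5, h6⟩ := p
      rw [hl] at h1 h2 h4
      refine ⟨a :: t, a, ⟨h1.right_of_append, (List.nodup_append.1 h2).2.1, haS, h5, ?_, rfl, ?_, ?_⟩, ?_⟩
      · rintro rfl; exact hST _ haS h5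
      · rw [← h4, List.getLast?_append]; simp [List.getLast?_cons]
      · intro v hv hvST
        rcases hvST with hS | hT
        · rcases List.mem_cons.1 hv with h | h
          · exact Or.inl h
          · exact absurd hS (ht v h)
        · exact Or.inr (h6 v (by rw [hl]; exact List.mem_append_right _ hv) hT)
      · intro v hv
        rw [hl]; exact List.mem_append_right _ hv
    choose! L a hL using hcut
    let e := Y.equivFinOfCardEq hY
    refine ⟨fun i => L (e.symm i), fun i => ⟨a (e.symm i), _, (hL _ (e.symm i).2).1⟩, ?_⟩
    intro i j hij v h1 h2
    refine hP.disj _ (e.symm i).2 _ (e.symm j).2 ?_ ((hL _ (e.symm i).2).2 v h1) ((hL _ (e.symm j).2).2 v h2)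
    intro h
    exact hij (e.symm.injective (Subtype.ext h))
  · right
    refine ⟨X, hX, fun l h1 h2 h3 h4 => ?_⟩
    obtain ⟨l', y, hp, hs⟩ := prefix_hit h1 h2 h3 h4
    obtain ⟨v, hv, hvX⟩ := h l' y hp
    exact ⟨v, hs v hv, hvX⟩

theorem IsL.rev {R : V → V → Prop} (hR : ∀ u v, R u v → R v u) {S T : Set V} {l : List V} {a b : V}
    (h : IsL R S T l a b) : IsL R T S l.reverse b a := by
  refine ⟨?_, List.nodup_reverse.2 h.nodup, h.bT, h.aS, h.ne.symm, by simp [h.last], by simp [h.head], ?_⟩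
  · rw [List.isChain_reverse]
    exact h.chain.imp (fun u v => hR u v)
  · intro v hv hvS
    exact (h.only v (by simpa using hv) hvS.symm).symm

theorem half {R : V → V → Prop} (hR : ∀ u v, R u v → R v u) {C W : Set V} {p q Q : List V} {y a b s : V}
    (hP : IsL R C C (p ++ y :: q) a b) (hPW : ∀ v ∈ p ++ y :: q, v ∈ W) (hbq : b ∈ q)
    (hQ : IsL R (C \ W) W Q s y) : IsL R C C (p ++ Q.reverse) a s := by
  have hQy : ∀ v ∈ Q, v ∈ W → v = y := by
    intro v hv hW
    rcases hQ.only v hv (Or.inr hW) with h | h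
    · exact absurd (h ▸ hW) hQ.aS.2
    · exact h
  have haW : a ∈ W := hPW a (List.mem_of_head? hP.head)
  have hn := List.nodup_append.1 hP.nodup
  have hyq := (List.nodup_cons.1 hn.2.1).1
  have hbpy : ∀ v, v ∈ p ∨ v = y → v ∈ C → v = a := by
    intro v hv hC
    rcases hP.only v (by simp; tauto) (Or.inl hC) with h | h
    · exact h
    · exfalso
      subst h
      rcases hv with hv | rfl
      · exact hn.2.2 v hv v (by simp [hbq]) rfl
      · exact hyq hbq
  have hQr := hQ.rev hR
  refine ⟨?_, ?_, hP.aS, hQ.aS.1, ?_, ?_, ?_, ?_⟩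
  · have hc := List.isChain_append.1 hP.chain
    refine List.isChain_append.2 ⟨hc.1, hQr.chain, ?_⟩
    intro u hu v hv
    rw [hQr.head] at hv
    obtain rfl : y = v := by simpa using hv
    exact hc.2.2 u hu y (by simp)
  · refine List.nodup_append.2 ⟨hn.1, hQr.nodup, ?_⟩
    rintro u hu v hv rfl
    have := hQy u (by simpa using hv) (hPW u (by simp [hu]))
    exact hn.2.2 u hu u (by simp [this]) rfl
  · rintro rfl; exact hQ.aS.2 haW
  · rw [← hP.head]
    cases p with
    | nil => simpa using hQ.last
    | cons => simp
  · rw [List.getLast?_append]; simp [hQ.head]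
  · intro v hv hvC
    have hC : v ∈ C := by tauto
    rcases List.mem_append.1 hv with h | h
    · exact Or.inl (hbpy v (Or.inl h) hC)
    · have h : v ∈ Q := by simpa using h
      by_cases hW : v ∈ W
      · exact Or.inl (hbpy v (Or.inr (hQy v h hW)) hC)
      · rcases hQ.only v h (Or.inl ⟨hC, hW⟩) with h | h
        · exact Or.inr h
        · exact absurd (h ▸ hQ.bT) hW

theorem family_cons {k : ℕ} {p : List V → Prop} (Ps : Fin k → List V) (h1 : ∀ i, p (Ps i))
    (h2 : ∀ i j, i ≠ j → List.Disjoint (Ps i) (Ps j)) (l : List V) (hl : p l)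
    (h3 : ∀ i, List.Disjoint l (Ps i)) : ∃ Qs : Fin (k+1) → List V, (∀ i, p (Qs i)) ∧
      ∀ i j, i ≠ j → List.Disjoint (Qs i) (Qs j) := by
  refine ⟨Fin.cons l Ps, ?_, ?_⟩
  · intro i
    refine Fin.cases ?_ (fun i => ?_) i
    · simpa using hl
    · simpa using h1 i
  · intro i j
    refine Fin.cases ?_ (fun i => ?_) i <;> refine Fin.cases ?_ (fun j => ?_) j
    · intro h; exact absurd rfl h
    · intro _; simpa using h3 j
    · intro _; simpa using (h3 i).symm
    · intro h; simpa using h2 i j (fun hh => h (by rw [hh]))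

theorem two_legs {R : V → V → Prop} (hR : ∀ u v, R u v → R v u) {C W : Set V} {P Q1 Q2 : List V}
    {a b s1 y1 s2 y2 : V} (hP : IsL R C C P a b) (hPW : ∀ v ∈ P, v ∈ W)
    (hQ1 : IsL R (C \ W) W Q1 s1 y1) (hQ2 : IsL R (C \ W) W Q2 s2 y2) (hd : List.Disjoint Q1 Q2)
    (h1 : y1 ∈ P) (h2 : y2 ∈ P) :
    ∃ N1 N2, (∃ a b, IsL R C C N1 a b) ∧ (∃ a b, IsL R C C N2 a b) ∧ List.Disjoint N1 N2 ∧
      ∀ v, v ∈ N1 ∨ v ∈ N2 → v ∈ P ∨ v ∈ Q1 ∨ v ∈ Q2 := by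
  have hQy : ∀ Q s y, IsL R (C \ W) W Q s y → ∀ v ∈ Q, v ∈ W → v = y := by
    intro Q s y hQ v hv hW
    rcases hQ.only v hv (Or.inr hW) with h | h
    · exact absurd (h ▸ hW) hQ.aS.2
    · exact h
  have main : ∀ {Q1 Q2 : List V} {s1 y1 s2 y2 : V} (_ : IsL R (C \ W) W Q1 s1 y1)
      (_ : IsL R (C \ W) W Q2 s2 y2) (_ : List.Disjoint Q1 Q2) (p1 p2 p3 : List V)
      (_ : P = p1 ++ y1 :: (p2 ++ y2 :: p3)),
      ∃ N1 N2, (∃ a b, IsL R C C N1 a b) ∧ (∃ a b, IsL R C C N2 a b) ∧ List.Disjoint N1 N2 ∧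
        ∀ v, v ∈ N1 ∨ v ∈ N2 → v ∈ P ∨ v ∈ Q1 ∨ v ∈ Q2 := by
    intro Q1 Q2 s1 y1 s2 y2 hQ1 hQ2 hd p1 p2 p3 he
    have hlast : b ∈ y2 :: p3 := by
      have := hP.last
      have e : P = (p1 ++ y1 :: p2) ++ (y2 :: p3) := by simp [he]
      rw [e, List.getLast?_append] at this
      apply List.mem_of_getLast?
      rw [← this]; simp [List.getLast?_cons]
    have hhead : a ∈ p1 ++ [y1] := by
      have := hP.head
      rw [he] at this
      apply List.mem_of_head?
      rw [← this]
      cases p1 <;> simp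
    have er : P.reverse = p3.reverse ++ y2 :: (p2.reverse ++ y1 :: p1.reverse) := by simp [he]
    have n1 : IsL R C C (p1 ++ Q1.reverse) a s1 :=
      half hR (he ▸ hP) (he ▸ hPW) (by simp at hlast ⊢; tauto) hQ1
    have n2 : IsL R C C (p3.reverse ++ Q2.reverse) b s2 :=
      half hR (er ▸ hP.rev hR) (by rw [← er]; simpa using hPW) (by simp at hhead ⊢; tauto) hQ2
    refine ⟨_, _, ⟨_, _, n1⟩, ⟨_, _, n2⟩, ?_, ?_⟩
    · have hn := hP.nodup
      have e : P = (p1 ++ y1 :: p2) ++ (y2 :: p3) := by simp [he]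
      rw [e] at hn
      have hnd := (List.nodup_append.1 hn).2.2
      intro v hv1 hv2
      simp only [List.mem_append, List.mem_reverse] at hv1 hv2
      rcases hv1 with hv1 | hv1 <;> rcases hv2 with hv2 | hv2
      · exact hnd v (by simp [hv1]) v (by simp [hv2]) rfl
      · have := hQy _ _ _ hQ2 v hv2 (hPW v (by simp [he, hv1]))
        exact hnd v (by simp [hv1]) v (by simp [this]) rfl
      · have := hQy _ _ _ hQ1 v hv1 (hPW v (by simp [he, hv2]))
        exact hnd v (by simp [this]) v (by simp [hv2]) rfl
      · exact hd hv1 hv2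
    · intro v hv
      rw [he]
      simp at hv ⊢
      tauto
  have hne : y1 ≠ y2 := by
    rintro rfl
    exact hd (List.mem_of_getLast? hQ1.last) (List.mem_of_getLast? hQ2.last)
  obtain ⟨p, q, he⟩ := List.append_of_mem h1
  have h2' := h2
  rw [he] at h2'
  rcases List.mem_append.1 h2' with h | h
  · obtain ⟨p', q', he'⟩ := List.append_of_mem h
    obtain ⟨N1, N2, a1, a2, a3, a4⟩ := main hQ2 hQ1 hd.symm p' q' q (by simp [he, he'])
    exact ⟨N1, N2, a1, a2, a3, fun v hv => by have := a4 v hv; tauto⟩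
  · have h : y2 ∈ q := by
      rcases List.mem_cons.1 h with h | h
      · exact absurd h.symm hne
      · exact h
    obtain ⟨p', q', he'⟩ := List.append_of_mem h
    exact main hQ1 hQ2 hd p p' q' (by simp [he, he'])

theorem gallai (R : V → V → Prop) (hR : ∀ u v, R u v → R v u) (C : Set V) (k : ℕ) :
    (∃ Ps : Fin k → List V, (∀ i, ∃ a b, IsL R C C (Ps i) a b) ∧
      ∀ i j, i ≠ j → List.Disjoint (Ps i) (Ps j)) ∨
    (∃ X : Finset V, X.card ≤ 3 * k ∧ ∀ l a b, IsL R C C l a b → ∃ v ∈ l, v ∈ X) := by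
  classical
  induction k with
  | zero => exact Or.inl ⟨fun _ => [], fun i => i.elim0, fun i => i.elim0⟩
  | succ k ih =>
    rcases ih with ⟨Ps, hPs, hd⟩ | ⟨X, hX, h⟩
    swap
    · exact Or.inr ⟨X, by omega, h⟩
    by_cases hgoal : ∃ Ps : Fin (k+1) → List V, (∀ i, ∃ a b, IsL R C C (Ps i) a b) ∧
      ∀ i j, i ≠ j → List.Disjoint (Ps i) (Ps j)
    · exact Or.inl hgoal
    right
    choose a b hab using hPs
    set W : Set V := {v | ∃ i, v ∈ Ps i} with hW
    rcases mengerL R (C \ W) W (fun v hv => hv.2) (k+1) with ⟨Qs, hQs, hQd⟩ | ⟨X0, hX0, hh⟩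
    · exfalso
      apply hgoal
      choose s y hsy using hQs
      have hyW : ∀ j, ∃ i, y j ∈ Ps i := fun j => (hsy j).bT
      choose g hg using hyW
      obtain ⟨j1, j2, hj, hgj⟩ := Fintype.exists_ne_map_eq_of_card_lt g (by simp)
      set i := g j1 with hi
      obtain ⟨N1, N2, hN1, hN2, hN, hsub⟩ := two_legs hR (hab i) (fun v (hv : v ∈ Ps i) => (show v ∈ W from ⟨i, hv⟩)) (hsy j1) (hsy j2)
        (hQd j1 j2 hj) (hg j1) (by rw [hgj]; exact hg j2)
      have hQy : ∀ j v, v ∈ Qs j → ∀ i', v ∈ Ps i' → i' = g j := by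
        intro j v hv i' hvi
        have hvy : v = y j := by
          rcases (hsy j).only v hv (Or.inr ⟨i', hvi⟩) with h | h
          · exact absurd ⟨i', h ▸ hvi⟩ (hsy j).aS.2
          · exact h
        by_contra hne
        exact hd i' (g j) hne hvi (hvy ▸ hg j)
      have hoth : ∀ i', i' ≠ i → ∀ v, v ∈ N1 ∨ v ∈ N2 → v ∉ Ps i' := by
        intro i' hi' v hv hv'
        rcases hsub v hv with h | h | h
        · exact hd i' i hi' hv' h
        · exact hi' (hQy j1 v h i' hv')
        · exact hi' ((hQy j2 v h i' hv').trans hgj.symm)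
      refine family_cons (p := fun l => ∃ a b, IsL R C C l a b) (Function.update Ps i N1) ?_ ?_ N2 hN2 ?_
      · intro i'
        by_cases h : i' = i
        · rw [h, Function.update_self]; exact hN1
        · rw [Function.update_of_ne h]; exact ⟨_, _, hab i'⟩
      · intro i1 i2 h12
        by_cases h1 : i1 = i
        · have h2 : i2 ≠ i := fun h => h12 (h1.trans h.symm)
          rw [h1, Function.update_self, Function.update_of_ne h2]
          exact fun v hv hv' => hoth i2 h2 v (Or.inl hv) hv'
        · by_cases h2 : i2 = i
          · rw [h2, Function.update_self, Function.update_of_ne h1]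
            exact fun v hv hv' => hoth i1 h1 v (Or.inl hv') hv
          · rw [Function.update_of_ne h1, Function.update_of_ne h2]
            exact hd i1 i2 h12
      · intro i'
        by_cases h : i' = i
        · rw [h, Function.update_self]; exact hN.symm
        · rw [Function.update_of_ne h]
          exact fun v hv hv' => hoth i' h v (Or.inr hv) hv'
    · refine ⟨X0 ∪ (Finset.univ.image a ∪ Finset.univ.image b), ?_, ?_⟩
      · have c1 := Finset.card_union_le X0 (Finset.univ.image a ∪ Finset.univ.image b)
        have c2 := Finset.card_union_le (Finset.univ.image a) (Finset.univ.image b)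
        have c3 := Finset.card_image_le (s := Finset.univ) (f := a)
        have c4 := Finset.card_image_le (s := Finset.univ) (f := b)
        simp only [Finset.card_univ, Fintype.card_fin] at c3 c4
        omega
      · intro l a' b' hl
        have ha'l := List.mem_of_head? hl.head
        by_cases hlW : ∃ v ∈ l, v ∈ W
        · by_cases haW : a' ∈ W
          · obtain ⟨i, hi⟩ := haW
            refine ⟨a', ha'l, ?_⟩
            rcases (hab i).only a' hi (Or.inl hl.aS) with h | h <;> simp [h]
          · obtain ⟨v, hv, hvX⟩ := hh l hl.chain hl.nodup ⟨a', ⟨hl.aS, haW⟩, hl.head⟩ hlW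
            exact ⟨v, hv, by simp [hvX]⟩
        · exfalso
          apply hgoal
          refine family_cons (p := fun l => ∃ a b, IsL R C C l a b) Ps (fun i => ⟨_, _, hab i⟩) hd l ⟨_, _, hl⟩ ?_
          intro i v hv hv'
          exact hlW ⟨v, hv, i, hv'⟩

variable {Γ : Type} {G : LabGraph V Γ}

def LabGraph.R (G : LabGraph V Γ) (u v : V) : Prop := ∃ e, G.ends e = s(u, v)

theorem LabGraph.R_symm (G : LabGraph V Γ) (u v : V) (h : G.R u v) : G.R v u := by
  obtain ⟨e, he⟩ := h
  exact ⟨e, by rw [he, Sym2.eq_swap]⟩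

theorem toGPath {A B : Set V} {l : List V} {a b : V} (hc : l.IsChain G.R) (hn : l.Nodup) (hne : a ≠ b)
    (hh : l.head? = some a) (hl : l.getLast? = some b) (hab : (a ∈ A ∧ b ∈ B) ∨ (a ∈ B ∧ b ∈ A))
    (ho : ∀ v ∈ l, v ∈ A ∪ B → v = a ∨ v = b) :
    ∃ P : GPath G, IsABPath A B P ∧ P.verts = {v | v ∈ l} := by
  obtain ⟨n, hlen⟩ : ∃ n, l.length = n + 1 := by
    cases l with
    | nil => simp at hh
    | cons x t => exact ⟨t.length, rfl⟩
  have hadj : ∀ i : Fin n, ∃ e, G.ends e = s(l[i.1], l[i.1+1]) := by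
    intro i
    exact (List.isChain_iff_getElem.1 hc) i.1 (by omega)
  choose e he using hadj
  let P : GPath G := ⟨n, fun i => l[i.1], e, fun i j h => Fin.ext ((List.Nodup.getElem_inj_iff hn).1 h), fun i => by simpa using he i⟩
  have hf : P.first = a := by
    show l[0] = a
    rw [List.head?_eq_getElem?, List.getElem?_eq_getElem (by omega)] at hh
    simpa using hh
  have hla : P.last = b := by
    show l[n] = b
    rw [List.getLast?_eq_getElem?, List.getElem?_eq_getElem (by omega)] at hl
    simp [hlen] at hl
    exact hl
  refine ⟨P, ⟨?_, by rw [hf, hla]; exact hab, ?_⟩, ?_⟩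
  · rcases Nat.eq_zero_or_pos n with h | h
    · exfalso
      apply hne
      rw [← hf, ← hla]
      subst h
      rfl
    · exact h
  · rintro x ⟨i, rfl, h1, h2⟩ hx
    rcases ho (P.v i) (List.getElem_mem _) hx with h | h
    · exact h1 (P.inj (h.trans hf.symm))
    · exact h2 (P.inj (h.trans hla.symm))
  · ext v
    constructor
    · rintro ⟨i, rfl⟩; exact List.getElem_mem _
    · intro hv
      obtain ⟨i, hi, h⟩ := List.getElem_of_mem hv
      exact ⟨⟨i, by show i < n + 1; omega⟩, h⟩

theorem ofGPath (P : GPath G) : (List.ofFn P.v).IsChain G.R ∧ (List.ofFn P.v).Nodup ∧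
    (List.ofFn P.v).head? = some P.first ∧ (List.ofFn P.v).getLast? = some P.last := by
  refine ⟨?_, List.nodup_ofFn.2 P.inj, ?_, ?_⟩
  · rw [List.isChain_iff_getElem]
    intro i hi
    simp only [List.length_ofFn] at hi
    simp only [List.getElem_ofFn]
    exact ⟨P.e ⟨i, by omega⟩, P.incid ⟨i, by omega⟩⟩
  · simp [List.ofFn_succ, GPath.first]
  · rw [List.ofFn_succ']; simp [GPath.last]

/-- in a chain with two different ends every vertex is incident to an edge -/
theorem chain_mem {R : V → V → Prop} {K : Set V} (hK : ∀ u v, R u v → u ∈ K ∧ v ∈ K) :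
    ∀ {l : List V}, l.IsChain R → 2 ≤ l.length → ∀ v ∈ l, v ∈ K := by
  intro l hc hl v hv
  obtain ⟨i, hi, rfl⟩ := List.getElem_of_mem hv
  rw [List.isChain_iff_getElem] at hc
  rcases Nat.eq_zero_or_pos i with h | h
  · subst h; exact (hK _ _ (hc 0 (by omega))).1
  · have := (hK _ _ (hc (i-1) (by omega))).2
    have e : i - 1 + 1 = i := by omega
    simpa [e] using this

theorem part2 (k : ℕ) (A B : Set V) (G : LabGraph V Γ) [AddCommGroup Γ] :
    (∃ Ps : Fin k → GPath G, (∀ i, IsABPath A B (Ps i)) ∧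
          ∀ i j, i ≠ j → Disjoint (Ps i).verts (Ps j).verts) ∨
        (∃ X : Set V, X.Finite ∧ X.ncard ≤ 5 * k ∧
          ∀ P : GPath G, IsABPath A B P → (P.verts ∩ X).Nonempty) := by
  classical
  have conv : ∀ Ls : Fin k → List V, (∀ i, ∃ P : GPath G, IsABPath A B P ∧ P.verts = {v | v ∈ Ls i}) →
      (∀ i j, i ≠ j → List.Disjoint (Ls i) (Ls j)) → ∃ Ps : Fin k → GPath G, (∀ i, IsABPath A B (Ps i)) ∧
          ∀ i j, i ≠ j → Disjoint (Ps i).verts (Ps j).verts := by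
    intro Ls h1 h2
    choose Ps hP hV using h1
    refine ⟨Ps, hP, fun i j hij => ?_⟩
    rw [hV, hV, Set.disjoint_left]
    exact fun v a b => h2 i j hij a b
  rcases mengerL G.R (A \ B) B (fun v hv => hv.2) k with ⟨Ls, hL, hd⟩ | ⟨X1, hX1, h1⟩
  · left
    refine conv Ls (fun i => ?_) hd
    obtain ⟨a, b, h⟩ := hL i
    refine toGPath h.chain h.nodup h.ne h.head h.last (Or.inl ⟨h.aS.1, h.bT⟩) (fun v hv hvAB => h.only v hv ?_)
    by_cases hB : v ∈ B
    · exact Or.inr hB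
    · exact Or.inl ⟨hvAB.resolve_right hB, hB⟩
  rcases mengerL G.R (B \ A) A (fun v hv => hv.2) k with ⟨Ls, hL, hd⟩ | ⟨X2, hX2, h2⟩
  · left
    refine conv Ls (fun i => ?_) hd
    obtain ⟨a, b, h⟩ := hL i
    refine toGPath h.chain h.nodup h.ne h.head h.last (Or.inr ⟨h.aS.1, h.bT⟩) (fun v hv hvAB => h.only v hv ?_)
    by_cases hA : v ∈ A
    · exact Or.inr hA
    · exact Or.inl ⟨hvAB.resolve_left hA, hA⟩
  set K : Set V := {v | v ∈ A ∪ B → v ∈ A ∩ B} with hK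
  rcases gallai (fun u v => G.R u v ∧ u ∈ K ∧ v ∈ K) (fun u v h => ⟨G.R_symm u v h.1, h.2.2, h.2.1⟩)
    (A ∩ B) k with ⟨Ls, hL, hd⟩ | ⟨X3, hX3, h3⟩
  · left
    refine conv Ls (fun i => ?_) hd
    obtain ⟨a, b, h⟩ := hL i
    refine toGPath (h.chain.imp fun u v h => h.1) h.nodup h.ne h.head h.last (Or.inl ⟨h.aS.1, h.bT.2⟩)
      (fun v hv hvAB => h.only v hv (Or.inl ?_))
    have hlen : 2 ≤ (Ls i).length := by
      have e1 := h.head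
      have e2 := h.last
      have e3 := h.ne
      match hm : Ls i with
      | [] => simp [hm] at e1
      | [x] => simp [hm] at e1 e2; exact absurd (e1.symm.trans e2) e3
      | x :: y :: t => simp
    exact chain_mem (K := K) (fun u v h => h.2) h.chain hlen v hv hvAB
  right
  refine ⟨↑(X1 ∪ (X2 ∪ X3)), Finset.finite_toSet _, ?_, ?_⟩
  · rw [Set.ncard_coe_finset]
    have c1 := Finset.card_union_le X1 (X2 ∪ X3)
    have c2 := Finset.card_union_le X2 X3
    omega
  · intro P0 hP0
    obtain ⟨P, hv, -, hpos, hfA, hlB, hint⟩ := exists_normal P0 hP0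
    rw [← hv]
    obtain ⟨hc, hn, hh, hl⟩ := ofGPath P
    have hmem : ∀ v, v ∈ List.ofFn P.v → v ∈ P.verts := by
      intro v hv
      rw [List.mem_ofFn] at hv
      exact hv
    have hfm := List.mem_of_head? hh
    have hlm := List.mem_of_getLast? hl
    suffices h : ∃ v ∈ List.ofFn P.v, v ∈ X1 ∨ v ∈ X2 ∨ v ∈ X3 by
      obtain ⟨v, hv, hX⟩ := h
      exact ⟨v, hmem v hv, by simpa using hX⟩
    by_cases hfB : P.first ∈ B
    · by_cases hlA : P.last ∈ A
      · have honly : ∀ v ∈ List.ofFn P.v, v ∈ A ∪ B → v = P.first ∨ v = P.last := by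
          intro v hv hvAB
          obtain ⟨i, rfl⟩ := hmem v hv
          by_contra! hcon
          refine hint _ ⟨i, rfl, ?_, ?_⟩ hvAB
          · rintro rfl; exact hcon.1 rfl
          · rintro rfl; exact hcon.2 rfl
        have hvK : ∀ v ∈ List.ofFn P.v, v ∈ K := by
          intro v hv hvAB
          rcases honly v hv hvAB with rfl | rfl
          · exact ⟨hfA, hfB⟩
          · exact ⟨hlA, hlB⟩
        have hne : P.first ≠ P.last := by
          intro h
          have := congrArg Fin.val (P.inj h)
          simp at this
          omega
        obtain ⟨v, hv, hX⟩ := h3 (List.ofFn P.v) P.first P.last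
          ⟨hc.imp_of_mem_imp (fun u v hu hv h => ⟨h, hvK u hu, hvK v hv⟩), hn, ⟨hfA, hfB⟩, ⟨hlA, hlB⟩, hne, hh, hl,
            fun v hv hvC => honly v hv (Or.inl (by rcases hvC with h | h <;> exact h.1))⟩
        exact ⟨v, hv, Or.inr (Or.inr hX)⟩
      · obtain ⟨v, hv, hX⟩ := h2 (List.ofFn P.v).reverse
          (by rw [List.isChain_reverse]; exact hc.imp (fun u v => G.R_symm u v))
          (List.nodup_reverse.2 hn) ⟨P.last, ⟨hlB, hlA⟩, by rw [List.head?_reverse]; exact hl⟩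
          ⟨P.first, List.mem_reverse.2 hfm, hfA⟩
        exact ⟨v, List.mem_reverse.1 hv, Or.inr (Or.inl hX)⟩
    · obtain ⟨v, hv, hX⟩ := h1 _ hc hn ⟨P.first, ⟨hfA, hfB⟩, hh⟩ ⟨P.last, hlm, hlB⟩
      exact ⟨v, hv, Or.inl hX⟩
end Part3


/-- If `∅ ≠ Λ ⊊ Γ`, then the family of `Λ`-allowable `A`-`B`-paths
does not satisfy the Erdős–Pósa property; if `Λ = Γ`, then it does. -/
theorem erdos_posa_allowable_AB_paths_dichotomy
    (Γ : Type) [AddCommGroup Γ] [Fintype Γ] (Λ : Set Γ) :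
    ((Λ.Nonempty ∧ Λ ≠ Set.univ) →
      ¬ ∃ f : ℕ → ℕ, ∀ k : ℕ, 0 < k → ∀ (V : Type) (A B : Set V) (G : LabGraph V Γ),
        (∃ Ps : Fin k → GPath G,
          (∀ i, IsABPath A B (Ps i) ∧ (Ps i).glen ∈ Λ) ∧
          ∀ i j, i ≠ j → Disjoint (Ps i).verts (Ps j).verts) ∨
        (∃ X : Set V, X.Finite ∧ X.ncard ≤ f k ∧
          ∀ P : GPath G, IsABPath A B P → P.glen ∈ Λ → (P.verts ∩ X).Nonempty)) ∧
    (Λ = Set.univ →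
      ∃ f : ℕ → ℕ, ∀ k : ℕ, 0 < k → ∀ (V : Type) (A B : Set V) (G : LabGraph V Γ),
        (∃ Ps : Fin k → GPath G,
          (∀ i, IsABPath A B (Ps i) ∧ (Ps i).glen ∈ Λ) ∧
          ∀ i j, i ≠ j → Disjoint (Ps i).verts (Ps j).verts) ∨
        (∃ X : Set V, X.Finite ∧ X.ncard ≤ f k ∧
          ∀ P : GPath G, IsABPath A B P → P.glen ∈ Λ → (P.verts ∩ X).Nonempty)) := by
  refine ⟨fun h => part1 Λ h.1 h.2, ?_⟩
  rintro rfl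
  refine ⟨fun k => 5 * k, fun k _ V A B G => ?_⟩
  rcases part2 k A B G with ⟨Ps, h1, h2⟩ | ⟨X, h1, h2, h3⟩
  · exact Or.inl ⟨Ps, fun i => ⟨h1 i, trivial⟩, h2⟩
  · exact Or.inr ⟨X, h1, h2, fun P hP _ => h3 P hP⟩
end

section
/- Let Γ be a finite abelian group and let Λ ⊆ Γ with ∅ ≠ Λ ≠ Γ. In the group Γ' = Γ × (ℤ/2ℤ)², the set Λ' = {(g,(1,1)) : g ∈ Λ} does not satisfy (EP1); in fact, there exist a ∉ Λ and c ∈ Γ with a+c ∈ Λ, and then A = (a,(1,0)), B = (0,(0,1)), C = (c,(0,0)) satisfy A+B+C ∈ Λ', A+B ∉ Λ', (2A+⟨C⟩)∩Λ' = ∅, and (2B+⟨C⟩)∩Λ' = ∅. -/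
/-- The encoding of `Λ`-allowable `A`-`B`-paths: the subset
`Λ' = {(g, (1,1)) : g ∈ Λ}` of `Γ × (ℤ/2ℤ)²`. -/
def encSet {Γ : Type} (Λ : Set Γ) : Set (Γ × (ZMod 2 × ZMod 2)) :=
  {p | p.2 = (1, 1) ∧ p.1 ∈ Λ}

/-- If `∅ ≠ Λ ≠ Γ`, then `Λ' = {(g,(1,1)) : g ∈ Λ}` fails (EP1) in
`Γ × (ℤ/2ℤ)²`; in fact there are `a ∉ Λ` and `c ∈ Γ` with `a + c ∈ Λ`, and then
`A = (a,(1,0))`, `B = (0,(0,1))`, `C = (c,(0,0))` witness the failure. -/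
theorem encoded_AB_set_fails_EP1
    (Γ : Type) [AddCommGroup Γ] [Fintype Γ] (Λ : Set Γ)
    (hne : Λ.Nonempty) (hproper : Λ ≠ Set.univ) :
    ¬ EP1 (encSet Λ) ∧
    ∃ a c : Γ, a ∉ Λ ∧ a + c ∈ Λ ∧
      (((a, ((1 : ZMod 2), (0 : ZMod 2))) : Γ × (ZMod 2 × ZMod 2)) +
        (0, (0, 1)) + (c, (0, 0)) ∈ encSet Λ) ∧
      (((a, ((1 : ZMod 2), (0 : ZMod 2))) : Γ × (ZMod 2 × ZMod 2)) +
        (0, (0, 1)) ∉ encSet Λ) ∧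
      (¬ ∃ z ∈ AddSubgroup.zmultiples
          (((c, ((0 : ZMod 2), (0 : ZMod 2)))) : Γ × (ZMod 2 × ZMod 2)),
        2 • (((a, ((1 : ZMod 2), (0 : ZMod 2)))) : Γ × (ZMod 2 × ZMod 2)) + z ∈ encSet Λ) ∧
      (¬ ∃ z ∈ AddSubgroup.zmultiples
          (((c, ((0 : ZMod 2), (0 : ZMod 2)))) : Γ × (ZMod 2 × ZMod 2)),
        2 • (((0, ((0 : ZMod 2), (1 : ZMod 2)))) : Γ × (ZMod 2 × ZMod 2)) + z ∈ encSet Λ) := by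
  have key : ∃ a c : Γ, a ∉ Λ ∧ a + c ∈ Λ := by
    obtain ⟨l, hl⟩ := hne
    obtain ⟨a, ha⟩ := (Set.ne_univ_iff_exists_notMem Λ).1 hproper
    exact ⟨a, l - a, ha, by simpa using hl⟩
  obtain ⟨a, c, ha, hac⟩ := key
  have h1 : ((a, ((1 : ZMod 2), (0 : ZMod 2))) : Γ × (ZMod 2 × ZMod 2)) +
        (0, (0, 1)) + (c, (0, 0)) ∈ encSet Λ := by
    simp [encSet, hac]
  have h2 : ((a, ((1 : ZMod 2), (0 : ZMod 2))) : Γ × (ZMod 2 × ZMod 2)) +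
        (0, (0, 1)) ∉ encSet Λ := by
    simp [encSet, ha]
  have h3 : ¬ ∃ z ∈ AddSubgroup.zmultiples
          (((c, ((0 : ZMod 2), (0 : ZMod 2)))) : Γ × (ZMod 2 × ZMod 2)),
        2 • (((a, ((1 : ZMod 2), (0 : ZMod 2)))) : Γ × (ZMod 2 × ZMod 2)) + z ∈ encSet Λ := by
    rintro ⟨z, hz, h, -⟩
    obtain ⟨n, rfl⟩ := AddSubgroup.mem_zmultiples_iff.1 hz
    have := congrArg Prod.snd h
    simp at this
  have h4 : ¬ ∃ z ∈ AddSubgroup.zmultiples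
          (((c, ((0 : ZMod 2), (0 : ZMod 2)))) : Γ × (ZMod 2 × ZMod 2)),
        2 • (((0, ((0 : ZMod 2), (1 : ZMod 2)))) : Γ × (ZMod 2 × ZMod 2)) + z ∈ encSet Λ := by
    rintro ⟨z, hz, h, -⟩
    obtain ⟨n, rfl⟩ := AddSubgroup.mem_zmultiples_iff.1 hz
    have := congrArg Prod.fst h
    simp at this
  refine ⟨fun h => ?_, a, c, ha, hac, h1, h2, h3, h4⟩
  rcases h _ _ _ h1 with h | h | h
  · exact h2 h
  · exact h3 h
  · exact h4 h
end
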